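/- arXiv:2112.14767 — 2 statements merged into one kernel-verified Lean document; each statement's English description precedes it below -/
import Mathlib

section
/- Let q > 2 and let φ : S² → S² be a homeomorphism of the unit sphere in ℝ³. Let D̃_k be a dyadic decomposition of S² into closed bi-Lipschitz squares of diameter comparable to 2^{-k}. Then the double integral ∫_{S²}∫_{S²} |φ(x) − φ(y)|^q / |x − y|^{q+1} dx dy is finite if and only if ∑_{k=1}^∞ 2^{k(q−3)} ∑_{Q̃ ∈ D̃_k} (diam φ(Q̃))^q < ∞. -/
open MeasureTheory
open scoped NNReal ENNReal

noncomputable section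

/-- The closed dyadic square of generation `k` with lower-left lattice corner `(i/2^k, j/2^k)`
inside `[0,1]²`. -/
def dyadicSq (k : ℕ) (i j : ℕ) : Set (ℝ × ℝ) :=
  Set.Icc ((i : ℝ) / 2 ^ k) (((i : ℝ) + 1) / 2 ^ k) ×ˢ
    Set.Icc ((j : ℝ) / 2 ^ k) (((j : ℝ) + 1) / 2 ^ k)

/-- The six faces of the unit cube `[0,1]³ ⊂ ℝ³`, parametrized over `[0,1]²`. -/
def cubeFace : Fin 6 → ℝ × ℝ → EuclideanSpace ℝ (Fin 3) :=
  ![fun p => (WithLp.equiv 2 (Fin 3 → ℝ)).symm ![0, p.1, p.2],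
    fun p => (WithLp.equiv 2 (Fin 3 → ℝ)).symm ![1, p.1, p.2],
    fun p => (WithLp.equiv 2 (Fin 3 → ℝ)).symm ![p.1, 0, p.2],
    fun p => (WithLp.equiv 2 (Fin 3 → ℝ)).symm ![p.1, 1, p.2],
    fun p => (WithLp.equiv 2 (Fin 3 → ℝ)).symm ![p.1, p.2, 0],
    fun p => (WithLp.equiv 2 (Fin 3 → ℝ)).symm ![p.1, p.2, 1]]

/-- The boundary of the unit cube `[0,1]³`. -/
def cubeBoundary : Set (EuclideanSpace ℝ (Fin 3)) :=
  ⋃ f : Fin 6, cubeFace f '' (Set.Icc (0 : ℝ) 1 ×ˢ Set.Icc (0 : ℝ) 1)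

/-!
The argument works on an Ahlfors `d`-regular space with dyadic pieces and the kernel
`dist x y ^ (-α)`, where `α > 2 * d - 1`; the sphere has `d = 2`, so that the exponent `α = q + 1`
is allowed when `q > 2`.

If the integral is finite, so is the sum: complements of balls in the sphere are connected, so at
small scales a homeomorphism of the sphere is quasi-monotone, that is, the diameter of the image of
a ball is at most twice that of the image of its bounding sphere. It therefore suffices to bound the
oscillation of `φ` on one sphere of radius `t ∈ [r, 2 * r]`. Telescoping mean oscillations over
balls shrinking to a point bounds that oscillation by a multiscale energy near the sphere of radius
`t`, and averaging over `t` gains one power of the thickness. This gain of one dimension is what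
makes the geometric weights summable when `α > 2 * d - 1`; the dyadic pieces have bounded overlap,
so the sum over all generations is controlled by the double integral.

If the sum is finite, so is the integral: points at distance about `1 / 2 ^ k` are joined by a chain
of boundedly many pieces of generation `k`, so the integrand is dominated by a constant plus a
weighted sum of indicators of squares of balls, whose integral is the given sum.
-/

section MeanOscillation

open Filter Topology

variable {X Y : Type*} [MeasurableSpace X] [PseudoEMetricSpace Y] {μ : Measure X} {φ : X → Y}
  {q : ℝ}

/-- The mean `q`-oscillation of `φ` over `B`: the average of `edist (φ y) (φ z) ^ q` over
`y, z ∈ B`. -/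
def meanOsc (μ : Measure X) (φ : X → Y) (q : ℝ) (B : Set X) : ℝ≥0∞ :=
  ⨍⁻ y in B, ⨍⁻ z in B, edist (φ y) (φ z) ^ q ∂μ ∂μ

lemma edist_rpow_le_two_rpow_mul_add (hq : 0 < q) (a b c : Y) :
    edist a b ^ q ≤ 2 ^ q * (edist a c ^ q + edist b c ^ q) := by
  have hmax : edist a b ≤ 2 * max (edist a c) (edist b c) :=
    (edist_triangle_right a b c).trans <| by
      rw [two_mul]; exact add_le_add (le_max_left _ _) (le_max_right _ _)
  calc edist a b ^ q ≤ (2 * max (edist a c) (edist b c)) ^ q := by gcongr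
    _ = 2 ^ q * max (edist a c) (edist b c) ^ q := ENNReal.mul_rpow_of_nonneg _ _ hq.le
    _ ≤ 2 ^ q * (edist a c ^ q + edist b c ^ q) := by
      gcongr
      rcases max_cases (edist a c) (edist b c) with ⟨h, -⟩ | ⟨h, -⟩ <;> rw [h]
      exacts [le_self_add, le_add_self]

lemma inv_le_mul_inv_of_le_mul {a b D : ℝ≥0∞} (hD₀ : D ≠ 0) (hD : D ≠ ⊤) (h : a ≤ D * b) :
    b⁻¹ ≤ D * a⁻¹ := calc
  b⁻¹ = D * (D * b)⁻¹ := by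
    rw [ENNReal.mul_inv (.inl hD₀) (.inl hD), ← mul_assoc, ENNReal.mul_inv_cancel hD₀ hD, one_mul]
  _ ≤ D * a⁻¹ := by gcongr

lemma setLAverage_le_mul_setLAverage {s t : Set X} {D : ℝ≥0∞} (hst : s ⊆ t) (hD₀ : D ≠ 0)
    (hD : D ≠ ⊤) (hμ : μ t ≤ D * μ s) (f : X → ℝ≥0∞) :
    ⨍⁻ x in s, f x ∂μ ≤ D * ⨍⁻ x in t, f x ∂μ := by
  rw [setLAverage_eq, setLAverage_eq, div_eq_mul_inv, div_eq_mul_inv, mul_left_comm]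
  exact mul_le_mul' (lintegral_mono_set hst) (inv_le_mul_inv_of_le_mul hD₀ hD hμ)

lemma edist_rpow_le_setLAverage_add_setLAverage (hq : 0 < q)
    (hφ : ∀ y, Measurable fun z => edist (φ y) (φ z)) {s t : Set X} {D : ℝ≥0∞} (hst : s ⊆ t)
    (hs₀ : μ s ≠ 0) (hs : μ s ≠ ⊤) (hD₀ : D ≠ 0) (hD : D ≠ ⊤) (hμ : μ t ≤ D * μ s) (y y' : X) :
    edist (φ y) (φ y') ^ q ≤
      2 ^ q * (D * ⨍⁻ z in t, edist (φ y) (φ z) ^ q ∂μ + ⨍⁻ z in s, edist (φ y') (φ z) ^ q ∂μ) :=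
  calc edist (φ y) (φ y') ^ q
    _ = ⨍⁻ _ in s, edist (φ y) (φ y') ^ q ∂μ := (setLAverage_const hs₀ hs _).symm
    _ ≤ ⨍⁻ z in s, 2 ^ q * (edist (φ y) (φ z) ^ q + edist (φ y') (φ z) ^ q) ∂μ :=
      lintegral_mono fun z => edist_rpow_le_two_rpow_mul_add hq _ _ _
    _ = 2 ^ q * (⨍⁻ z in s, edist (φ y) (φ z) ^ q ∂μ + ⨍⁻ z in s, edist (φ y') (φ z) ^ q ∂μ) := by
      rw [laverage, lintegral_const_mul' _ _ (by finiteness),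
        lintegral_add_left ((hφ y).pow_const q)]
      rfl
    _ ≤ _ := by gcongr; exact setLAverage_le_mul_setLAverage hst hD₀ hD hμ _

lemma exists_mem_setLAverage_edist_rpow_le_meanOsc [SFinite μ]
    (hφ : Measurable fun p : X × X => edist (φ p.1) (φ p.2)) {s : Set X} (hs₀ : μ s ≠ 0)
    (hs : μ s ≠ ⊤) : ∃ y ∈ s, ⨍⁻ z in s, edist (φ y) (φ z) ^ q ∂μ ≤ meanOsc μ φ q s := by
  refine exists_le_setLAverage hs₀ hs (Measurable.aemeasurable ?_)
  simp only [setLAverage_eq]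
  exact (hφ.pow_const q).lintegral_prod_right'.div_const _

/-- Telescoping over shrinking neighbourhoods of `x`: in each `B n` pick a point whose mean distance
to the others is at most the average; consecutive points are then close, and they converge to `x`.
-/
theorem edist_le_of_meanOsc_le_geometric [SFinite μ] [TopologicalSpace X] (hq : 0 < q)
    (hφ : Measurable fun p : X × X => edist (φ p.1) (φ p.2)) {B : ℕ → Set X} (hB : Antitone B)
    (hB₀ : ∀ n, μ (B n) ≠ 0) (hB_top : ∀ n, μ (B n) ≠ ⊤) {D : ℝ≥0∞} (hD₀ : D ≠ 0) (hD : D ≠ ⊤)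
    (hμ : ∀ n, μ (B n) ≤ D * μ (B (n + 1))) {x : X} (hBx : Tendsto B atTop (𝓝 x).smallSets)
    (hφx : ContinuousAt φ x) {η T : ℝ≥0∞} (hT : ∀ n, meanOsc μ φ q (B n) ≤ T * (η ^ n) ^ q)
    (hη : η ≤ 1) {y₀ : X} (hy₀ : y₀ ∈ B 0) (hy₀T : ⨍⁻ z in B 0, edist (φ y₀) (φ z) ^ q ∂μ ≤ T) :
    edist (φ y₀) (φ x) ≤ (2 ^ q * ((D + 1) * T)) ^ q⁻¹ / (1 - η) := by
  choose y hyB hy using fun n =>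
    exists_mem_setLAverage_edist_rpow_le_meanOsc (q := q) hφ (hB₀ (n + 1)) (hB_top (n + 1))
  let u : ℕ → X := fun n => n.casesOn y₀ y
  have huB : ∀ n, u n ∈ B n := fun n => by cases n; exacts [hy₀, hyB _]
  have hu : ∀ n, ⨍⁻ z in B n, edist (φ (u n)) (φ z) ^ q ∂μ ≤ T * (η ^ n) ^ q := fun n => by
    cases n
    case zero => rwa [pow_zero, ENNReal.one_rpow, mul_one]
    case succ n => exact (hy n).trans (hT _)
  have hstep : ∀ n, edist (φ (u n)) (φ (u (n + 1))) ≤ (2 ^ q * ((D + 1) * T)) ^ q⁻¹ * η ^ n := by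
    intro n
    rw [← ENNReal.rpow_le_rpow_iff hq, ENNReal.mul_rpow_of_nonneg _ _ hq.le,
      ENNReal.rpow_inv_rpow hq.ne', mul_assoc, mul_assoc]
    refine (edist_rpow_le_setLAverage_add_setLAverage hq
      (fun _ => hφ.comp measurable_prodMk_left) (hB n.le_succ) (hB₀ _) (hB_top _) hD₀ hD (hμ n)
      _ _).trans ?_
    rw [add_mul, one_mul]
    gcongr
    · exact hu n
    · refine (hu (n + 1)).trans ?_
      gcongr T * ?_ ^ q
      exact pow_le_pow_right_of_le_one' hη n.le_succ
  have hux : Tendsto u atTop (𝓝 x) :=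
    tendsto_smallSets_iff.1 hBx |> fun h s hs => (h s hs).mono fun n hn => hn (huB n)
  exact edist_le_of_edist_le_geometric_of_tendsto₀ η _ hstep (hφx.tendsto.comp hux)

end MeanOscillation

section LevelSelection

open Metric

variable {X : Type*} [MeasurableSpace X] {μ : Measure X} {f : X → ℝ}

lemma measurable_indicator_dist_le (hf : Measurable f) (ρ : ℝ) {h : X → ℝ≥0∞} (hh : Measurable h) :
    Measurable fun p : ℝ × X => {y | dist (f y) p.1 ≤ ρ}.indicator h p.2 :=
  (hh.comp measurable_snd).indicator
    (s := {p : ℝ × X | dist (f p.2) p.1 ≤ ρ}) <|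
      measurableSet_le ((hf.comp measurable_snd).dist measurable_fst) measurable_const

lemma measurableSet_dist_le (hf : Measurable f) (t ρ : ℝ) : MeasurableSet {y | dist (f y) t ≤ ρ} :=
  measurableSet_le (hf.dist measurable_const) measurable_const

lemma measurable_setLIntegral_dist_le [SFinite μ] (hf : Measurable f) (ρ : ℝ) {h : X → ℝ≥0∞}
    (hh : Measurable h) : Measurable fun t => ∫⁻ y in {y | dist (f y) t ≤ ρ}, h y ∂μ := by
  simp only [← lintegral_indicator (measurableSet_dist_le hf _ ρ)]
  exact (measurable_indicator_dist_le hf ρ hh).lintegral_prod_right'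

lemma lintegral_setLIntegral_dist_le [SFinite μ] (hf : Measurable f) (ρ : ℝ) {h : X → ℝ≥0∞}
    (hh : Measurable h) :
    ∫⁻ t, ∫⁻ y in {y | dist (f y) t ≤ ρ}, h y ∂μ = ENNReal.ofReal (2 * ρ) * ∫⁻ y, h y ∂μ := by
  have hslice (y : X) :
      ∫⁻ t : ℝ, {y | dist (f y) t ≤ ρ}.indicator h y = ENNReal.ofReal (2 * ρ) * h y := calc
      _ = ∫⁻ t, (closedBall (f y) ρ).indicator (fun _ => h y) t := by
        classical simp only [Set.indicator_apply, Set.mem_ofPred_eq, mem_closedBall']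
      _ = _ := by
        rw [lintegral_indicator_const measurableSet_closedBall, Real.volume_closedBall, mul_comm]
  simp only [← lintegral_indicator (measurableSet_dist_le hf _ ρ)]
  rw [lintegral_lintegral_swap (measurable_indicator_dist_le hf ρ hh).aemeasurable]
  simp only [hslice, lintegral_const_mul _ hh]

/-- Some level `t` is at most average: this takes the place of the coarea formula for `f`. -/
lemma exists_mem_Icc_tsum_setLIntegral_dist_le {ι : Type*} [Countable ι] [SFinite μ]
    (hf : Measurable f) (ρ : ι → ℝ) {h : ι → X → ℝ≥0∞} (hh : ∀ j, Measurable (h j)) {a b : ℝ}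
    (hab : a < b) :
    ∃ t ∈ Set.Icc a b, ∑' j, ∫⁻ y in {y | dist (f y) t ≤ ρ j}, h j y ∂μ ≤
      ∑' j, ENNReal.ofReal (2 * ρ j / (b - a)) * ∫⁻ y, h j y ∂μ := by
  have hvol : volume (Set.Icc a b) = ENNReal.ofReal (b - a) := Real.volume_Icc
  have hpos : 0 < b - a := sub_pos.2 hab
  obtain ⟨t, ht, hle⟩ := exists_le_setLAverage (μ := volume) (s := Set.Icc a b)
    (f := fun t => ∑' j, ∫⁻ y in {y | dist (f y) t ≤ ρ j}, h j y ∂μ)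
    (by simpa [hvol] using hab) (by simp [hvol])
    (Measurable.tsum fun j => measurable_setLIntegral_dist_le hf (ρ j) (hh j)).aemeasurable
  refine ⟨t, ht, hle.trans ?_⟩
  rw [setLAverage_eq, lintegral_tsum fun j =>
    (measurable_setLIntegral_dist_le hf (ρ j) (hh j)).aemeasurable, hvol, div_eq_mul_inv,
    ← ENNReal.tsum_mul_right]
  refine ENNReal.tsum_le_tsum fun j => ?_
  rw [ENNReal.ofReal_div_of_pos hpos, div_eq_mul_inv, mul_right_comm,
    ← lintegral_setLIntegral_dist_le hf (ρ j) (hh j)]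
  gcongr
  exact Measure.restrict_le_self

end LevelSelection

section AhlforsRegular

open Metric

variable {X : Type*} [PseudoMetricSpace X] [MeasurableSpace X] {μ : Measure X} {d : ℝ} {A : ℝ≥0}

/-- `μ` is Ahlfors regular of dimension `d`: balls of radius `r ≤ 1` have measure comparable to
`r ^ d`. The upper bound is imposed at every scale, which bounds the total mass of bounded spaces.
-/
structure IsAhlforsRegular (μ : Measure X) (d : ℝ) (A : ℝ≥0) : Prop where
  ofReal_rpow_le : ∀ (x : X) {r : ℝ}, 0 < r → r ≤ 1 →
    ENNReal.ofReal (r ^ d) ≤ A * μ (closedBall x r)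
  measure_closedBall_le : ∀ (x : X) {r : ℝ}, 0 < r → μ (closedBall x r) ≤ A * ENNReal.ofReal (r ^ d)

namespace IsAhlforsRegular

lemma measure_closedBall_ne_top (h : IsAhlforsRegular μ d A) (x : X) {r : ℝ} (hr : 0 < r) :
    μ (closedBall x r) ≠ ⊤ :=
  ne_top_of_le_ne_top (by finiteness) (h.measure_closedBall_le x hr)

lemma measure_closedBall_ne_zero (h : IsAhlforsRegular μ d A) (x : X) {r : ℝ} (hr : 0 < r)
    (hr1 : r ≤ 1) : μ (closedBall x r) ≠ 0 := fun h0 => by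
  have := h.ofReal_rpow_le x hr hr1
  rw [h0, mul_zero, nonpos_iff_eq_zero, ENNReal.ofReal_eq_zero] at this
  exact this.not_gt (Real.rpow_pos_of_pos hr d)

lemma constant_ne_zero [Nonempty X] (h : IsAhlforsRegular μ d A) : (A : ℝ≥0∞) ≠ 0 := fun h0 => by
  obtain ⟨x⟩ := ‹Nonempty X›
  have := h.ofReal_rpow_le x one_pos le_rfl
  simp [h0] at this

lemma isFiniteMeasure [CompactSpace X] (h : IsAhlforsRegular μ d A) : IsFiniteMeasure μ := by
  rcases isEmpty_or_nonempty X with hX | ⟨⟨x⟩⟩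
  · rw [μ.eq_zero_of_isEmpty]; infer_instance
  · obtain ⟨r, hr, hsub⟩ := (isCompact_univ (X := X)).isBounded.subset_closedBall_lt 0 x
    exact ⟨(measure_mono hsub).trans_lt (h.measure_closedBall_ne_top x hr).lt_top⟩

lemma inv_measure_closedBall_le (h : IsAhlforsRegular μ d A) (x : X) {r : ℝ} (hr : 0 < r)
    (hr1 : r ≤ 1) : (μ (closedBall x r))⁻¹ ≤ A * ENNReal.ofReal (r ^ (-d)) := by
  rw [Real.rpow_neg hr.le, ENNReal.ofReal_inv_of_pos (Real.rpow_pos_of_pos hr d)]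
  have : Nonempty X := ⟨x⟩
  exact inv_le_mul_inv_of_le_mul h.constant_ne_zero ENNReal.coe_ne_top (h.ofReal_rpow_le x hr hr1)

lemma measure_closedBall_le_mul (h : IsAhlforsRegular μ d A) {s r : ℝ} (x y : X) (hs : 0 < s)
    (hr : 0 < r) (hr1 : r ≤ 1) :
    μ (closedBall x s) ≤ A ^ 2 * ENNReal.ofReal ((s / r) ^ d) * μ (closedBall y r) := by
  calc μ (closedBall x s) ≤ A * ENNReal.ofReal (s ^ d) := h.measure_closedBall_le x hs
    _ = A * ENNReal.ofReal ((s / r) ^ d) * ENNReal.ofReal (r ^ d) := by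
      rw [mul_assoc, ← ENNReal.ofReal_mul (by positivity), ← Real.mul_rpow (by positivity) hr.le,
        div_mul_cancel₀ s hr.ne']
    _ ≤ A * ENNReal.ofReal ((s / r) ^ d) * (A * μ (closedBall y r)) := by
      gcongr; exact h.ofReal_rpow_le y hr hr1
    _ = _ := by ring

end IsAhlforsRegular

end AhlforsRegular

section BallChain

open Metric Filter Topology

variable {X : Type*} [PseudoMetricSpace X] {x₀ x : X} {r : ℝ}

/-- A decreasing sequence of balls from `closedBall x₀ (4 * r)`, common to all points `x` with
`dist x x₀ ≤ 2 * r`, down to the point `x`. -/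
def ballChain (x₀ x : X) (r : ℝ) : ℕ → Set X
  | 0 => closedBall x₀ (4 * r)
  | n + 1 => closedBall x (r / 2 ^ (n + 1))

lemma exists_ballChain_eq_closedBall (x₀ x : X) (hr : 0 ≤ r) (n : ℕ) :
    ∃ c s, ballChain x₀ x r n = closedBall c s ∧ r / 2 ^ n ≤ s ∧ s ≤ 4 * r / 2 ^ n := by
  cases n with
  | zero => exact ⟨x₀, 4 * r, rfl, by linarith, by simp⟩
  | succ n => exact ⟨x, r / 2 ^ (n + 1), rfl, le_rfl, by gcongr; linarith⟩

lemma antitone_ballChain (hr : 0 ≤ r) (hx : dist x x₀ ≤ 2 * r) : Antitone (ballChain x₀ x r) := by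
  refine antitone_nat_of_succ_le fun n => ?_
  cases n with
  | zero => exact closedBall_subset_closedBall' (by norm_num; linarith)
  | succ n =>
    refine closedBall_subset_closedBall ?_
    gcongr
    exacts [one_le_two, Nat.le_succ _]

lemma ballChain_subset_dist_le (hr : 0 ≤ r) (hx₁ : r ≤ dist x x₀) (hx₂ : dist x x₀ ≤ 2 * r)
    (n : ℕ) :
    ballChain x₀ x r n ⊆ {y | dist (dist y x₀) (dist x x₀) ≤ 4 * r / 2 ^ n} := by
  intro y hy
  cases n with
  | zero =>
    have hy' : dist y x₀ ≤ 4 * r := hy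
    rw [Set.mem_ofPred_eq, Real.dist_eq, abs_le, pow_zero, div_one]
    constructor <;> linarith [dist_nonneg (x := y) (y := x₀)]
  | succ n =>
    have hy' : dist y x ≤ r / 2 ^ (n + 1) := hy
    refine (dist_dist_dist_le_left y x x₀).trans (hy'.trans ?_)
    gcongr
    linarith

lemma tendsto_ballChain_smallSets (x₀ x : X) (r : ℝ) :
    Tendsto (ballChain x₀ x r) atTop (𝓝 x).smallSets := by
  refine (tendsto_add_atTop_iff_nat 1).1 <| tendsto_smallSets_iff.2 fun s hs => ?_
  obtain ⟨δ, hδ, hsub⟩ := nhds_basis_closedBall.mem_iff.1 hs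
  have hlim : Tendsto (fun n : ℕ => r / (2 : ℝ) ^ (n + 1)) atTop (𝓝 0) :=
    ((tendsto_const_nhds).div_atTop (tendsto_pow_atTop_atTop_of_one_lt one_lt_two)).comp
      (tendsto_add_atTop_nat 1)
  filter_upwards [hlim.eventually_le_const hδ] with n hn
  exact (closedBall_subset_closedBall hn).trans hsub

lemma measure_ballChain_le_mul [MeasurableSpace X] {μ : Measure X} {d : ℝ} {A : ℝ≥0}
    (hμ : IsAhlforsRegular μ d A) (hd : 0 ≤ d) (hr : 0 < r) (hr1 : 4 * r ≤ 1) (n : ℕ) :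
    μ (ballChain x₀ x r n) ≤ A ^ 2 * ENNReal.ofReal (8 ^ d) * μ (ballChain x₀ x r (n + 1)) := by
  obtain ⟨c, s, hs, hrs, hsr⟩ := exists_ballChain_eq_closedBall x₀ x hr.le n
  have hpos : 0 < s := (by positivity : 0 < r / 2 ^ n).trans_le hrs
  have hle : r / 2 ^ (n + 1) ≤ 1 :=
    (div_le_self hr.le (one_le_pow₀ one_le_two)).trans (by linarith)
  rw [hs]
  refine (hμ.measure_closedBall_le_mul c x hpos (by positivity) hle).trans ?_
  refine mul_le_mul_left (mul_le_mul_right (ENNReal.ofReal_le_ofReal ?_) _) _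
  refine Real.rpow_le_rpow (by positivity) ?_ hd
  rw [div_le_iff₀ (by positivity)]
  calc s ≤ 4 * r / 2 ^ n := hsr
    _ = 8 * (r / 2 ^ (n + 1)) := by rw [pow_succ]; field_simp; norm_num

end BallChain

section LocalEnergy

open Metric

variable {X Y : Type*} [PseudoMetricSpace X] [MeasurableSpace X] [PseudoEMetricSpace Y]
  {μ : Measure X} {φ : X → Y} {q d ε r : ℝ} {A : ℝ≥0}

/-- The part of the inner integral of `∫∫ edist (φ y) (φ z) ^ q` with `dist z y ≤ ρ`. -/
def localEnergy (μ : Measure X) (φ : X → Y) (q ρ : ℝ) (y : X) : ℝ≥0∞ :=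
  ∫⁻ z in closedBall y ρ, edist (φ y) (φ z) ^ q ∂μ

/-- The sum over the scales `r / 2 ^ j` of the local energies near `x`. The weights are those for
which it controls `q`-th powers of oscillations on the ball of radius `r` (`d` is the dimension and
`ε` a small positive margin). -/
def multiscaleEnergy (μ : Measure X) (φ : X → Y) (q d ε r : ℝ) (x : X) : ℝ≥0∞ :=
  ∑' j : ℕ, ENNReal.ofReal (2 ^ ((ε - 1) * j) * (r / 2 ^ j) ^ (-(2 * d))) *
    ∫⁻ y in closedBall x (4 * r), localEnergy μ φ q (8 * r / 2 ^ j) y ∂μ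

lemma measurable_localEnergy [OpensMeasurableSpace X] [SecondCountableTopology X] [SFinite μ]
    (hφ : Measurable fun p : X × X => edist (φ p.1) (φ p.2)) (q ρ : ℝ) :
    Measurable (localEnergy μ φ q ρ) := by
  have hclosed : MeasurableSet {p : X × X | dist p.2 p.1 ≤ ρ} :=
    measurableSet_le (measurable_snd.dist measurable_fst) measurable_const
  have := ((hφ.pow_const q).indicator hclosed).lintegral_prod_right' (ν := μ)
  unfold localEnergy
  simp only [← lintegral_indicator measurableSet_closedBall]
  exact this

lemma meanOsc_closedBall_le [OpensMeasurableSpace X] (hμ : IsAhlforsRegular μ d A)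
    (hd : 0 ≤ d) {s σ ρ : ℝ} (hs : 0 < s) (hsσ : s ≤ σ) (hσ : σ ≤ 1) (hσρ : 2 * σ ≤ ρ) (x : X) :
    meanOsc μ φ q (closedBall x σ) ≤ A ^ 2 * ENNReal.ofReal (s ^ (-(2 * d))) *
      ∫⁻ y in closedBall x σ, localEnergy μ φ q ρ y ∂μ := by
  have hinv : (μ (closedBall x σ))⁻¹ ≤ A * ENNReal.ofReal (s ^ (-d)) :=
    (hμ.inv_measure_closedBall_le x (hs.trans_le hsσ) hσ).trans <| by
      gcongr _ * ENNReal.ofReal ?_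
      exact Real.rpow_le_rpow_of_nonpos hs hsσ (neg_nonpos.2 hd)
  have hinner : ∀ y ∈ closedBall x σ,
      ⨍⁻ z in closedBall x σ, edist (φ y) (φ z) ^ q ∂μ ≤
        A * ENNReal.ofReal (s ^ (-d)) * localEnergy μ φ q ρ y := fun y hy => by
    rw [setLAverage_eq, div_eq_mul_inv, mul_comm]
    refine mul_le_mul' hinv (lintegral_mono_set (closedBall_subset_closedBall' ?_))
    linarith [mem_closedBall'.1 hy]
  calc meanOsc μ φ q (closedBall x σ)
    _ ≤ A * ENNReal.ofReal (s ^ (-d)) *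
        ∫⁻ y in closedBall x σ, ⨍⁻ z in closedBall x σ, edist (φ y) (φ z) ^ q ∂μ ∂μ := by
      rw [meanOsc, setLAverage_eq, div_eq_mul_inv, mul_comm]
      gcongr
    _ ≤ A * ENNReal.ofReal (s ^ (-d)) * ∫⁻ y in closedBall x σ,
        A * ENNReal.ofReal (s ^ (-d)) * localEnergy μ φ q ρ y ∂μ := by
      gcongr 1
      exact setLIntegral_mono' measurableSet_closedBall hinner
    _ = _ := by
      rw [lintegral_const_mul' _ _ (by finiteness), ← mul_assoc,
        show -(2 * d) = -d + -d by ring, Real.rpow_add hs, ENNReal.ofReal_mul (by positivity)]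
      ring

lemma meanOsc_ballChain_le [OpensMeasurableSpace X] (hμ : IsAhlforsRegular μ d A) (hd : 0 ≤ d)
    (hr : 0 < r) (hr1 : 4 * r ≤ 1) {x₀ x : X} (hx₁ : r ≤ dist x x₀) (hx₂ : dist x x₀ ≤ 2 * r)
    (j : ℕ) :
    meanOsc μ φ q (ballChain x₀ x r j) ≤ A ^ 2 * ENNReal.ofReal ((r / 2 ^ j) ^ (-(2 * d))) *
      ∫⁻ y in {y | dist (dist y x₀) (dist x x₀) ≤ 4 * r / 2 ^ j},
        localEnergy μ φ q (8 * r / 2 ^ j) y ∂μ.restrict (closedBall x₀ (4 * r)) := by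
  obtain ⟨c, s, hs, hrs, hsr⟩ := exists_ballChain_eq_closedBall x₀ x hr.le j
  rw [hs]
  refine (meanOsc_closedBall_le (ρ := 8 * r / 2 ^ j) hμ hd (by positivity) hrs (hsr.trans ?_) ?_
    c).trans ?_
  · exact (div_le_self (by positivity) (one_le_pow₀ one_le_two)).trans hr1
  · linarith [show 8 * r / 2 ^ j = 2 * (4 * r / 2 ^ j) by ring]
  · have hmeas : MeasurableSet {y | dist (dist y x₀) (dist x x₀) ≤ 4 * r / 2 ^ j} :=
      measurableSet_dist_le (continuous_id.dist continuous_const).measurable _ _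
    rw [← hs, Measure.restrict_restrict hmeas]
    gcongr
    exact Set.subset_inter (ballChain_subset_dist_le hr.le hx₁ hx₂ j)
      (antitone_ballChain hr.le hx₂ j.zero_le)

lemma meanOsc_ballChain_le_geometric [OpensMeasurableSpace X] (hμ : IsAhlforsRegular μ d A)
    (hd : 0 ≤ d) (hq : 0 < q) (hr : 0 < r) (hr1 : 4 * r ≤ 1) {x₀ x : X}
    (hx₁ : r ≤ dist x x₀) (hx₂ : dist x x₀ ≤ 2 * r)
    {S : ℝ≥0∞} (hS : ∑' j : ℕ, ∫⁻ y in {y | dist (dist y x₀) (dist x x₀) ≤ 4 * r / 2 ^ j},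
        ENNReal.ofReal (2 ^ (ε * j) * (r / 2 ^ j) ^ (-(2 * d))) *
          localEnergy μ φ q (8 * r / 2 ^ j) y ∂μ.restrict (closedBall x₀ (4 * r)) ≤ S) (j : ℕ) :
    meanOsc μ φ q (ballChain x₀ x r j) ≤ A ^ 2 * S * (ENNReal.ofReal (2 ^ (-ε / q)) ^ j) ^ q := by
  set η : ℝ≥0∞ := ENNReal.ofReal (2 ^ (-ε / q))
  have hweight : ENNReal.ofReal ((r / 2 ^ j) ^ (-(2 * d))) =
      (η ^ j) ^ q * ENNReal.ofReal (2 ^ (ε * j) * (r / 2 ^ j) ^ (-(2 * d))) := by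
    rw [← ENNReal.ofReal_pow (by positivity), ENNReal.ofReal_rpow_of_nonneg (by positivity) hq.le,
      ← ENNReal.ofReal_mul (by positivity), ← Real.rpow_mul_natCast two_pos.le,
      ← Real.rpow_mul two_pos.le, ← mul_assoc, ← Real.rpow_add two_pos,
      show -ε / q * j * q + ε * j = 0 by field_simp; ring, Real.rpow_zero, one_mul]
  refine (meanOsc_ballChain_le hμ hd hr hr1 hx₁ hx₂ j).trans ?_
  rw [hweight, mul_assoc, mul_assoc ((η ^ j) ^ q), ← lintegral_const_mul' _ _ (by finiteness),
    mul_assoc, mul_comm S]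
  gcongr
  exact (ENNReal.le_tsum j).trans hS

variable [OpensMeasurableSpace X] [SecondCountableTopology X]

lemma measurable_edist_comp (hφ : Continuous φ) :
    Measurable fun p : X × X => edist (φ p.1) (φ p.2) :=
  ((hφ.comp continuous_fst).edist (hφ.comp continuous_snd)).measurable

variable [SFinite μ]

lemma ediam_image_sphere_le_of_meanOsc_le (hμ : IsAhlforsRegular μ d A) (hd : 0 ≤ d) (hq : 0 < q)
    (hφ : Continuous φ) (hr : 0 < r) (hr1 : 4 * r ≤ 1) {x₀ : X} {t : ℝ} (ht : t ≤ 2 * r)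
    {η T : ℝ≥0∞} (hη : η ≤ 1)
    (hT : ∀ x ∈ sphere x₀ t, ∀ j, meanOsc μ φ q (ballChain x₀ x r j) ≤ T * (η ^ j) ^ q) :
    ediam (φ '' sphere x₀ t) ≤
      2 * ((2 ^ q * ((A ^ 2 * ENNReal.ofReal (8 ^ d) + 1) * T)) ^ q⁻¹ / (1 - η)) := by
  have : Nonempty X := ⟨x₀⟩
  have hr4 : 0 < 4 * r := by positivity
  obtain ⟨y₀, hy₀, hy₀T⟩ := exists_mem_setLAverage_edist_rpow_le_meanOsc (q := q)
    (measurable_edist_comp hφ) (hμ.measure_closedBall_ne_zero x₀ hr4 hr1)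
    (hμ.measure_closedBall_ne_top x₀ hr4)
  have hD₀ : A ^ 2 * ENNReal.ofReal (8 ^ d) ≠ 0 :=
    mul_ne_zero (pow_ne_zero 2 hμ.constant_ne_zero) (ENNReal.ofReal_pos.2 (by positivity)).ne'
  have key : ∀ x ∈ sphere x₀ t, edist (φ y₀) (φ x) ≤
      (2 ^ q * ((A ^ 2 * ENNReal.ofReal (8 ^ d) + 1) * T)) ^ q⁻¹ / (1 - η) := fun x hx => by
    have hball : ∀ n, ∃ c s, 0 < s ∧ s ≤ 1 ∧ ballChain x₀ x r n = closedBall c s := fun n => by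
      obtain ⟨c, s, hs, hrs, hsr⟩ := exists_ballChain_eq_closedBall x₀ x hr.le n
      exact ⟨c, s, (by positivity : 0 < r / 2 ^ n).trans_le hrs, hsr.trans <|
        (div_le_self hr4.le (one_le_pow₀ one_le_two)).trans hr1, hs⟩
    refine edist_le_of_meanOsc_le_geometric hq (measurable_edist_comp hφ)
      (antitone_ballChain hr.le ((mem_sphere.1 hx).trans_le ht)) (fun n => ?_) (fun n => ?_) hD₀
      (by finiteness) (measure_ballChain_le_mul hμ hd hr hr1) (tendsto_ballChain_smallSets x₀ x r)
      hφ.continuousAt (hT x hx) hη hy₀ (hy₀T.trans ?_)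
    · obtain ⟨c, s, hs, hs1, hcs⟩ := hball n
      exact hcs ▸ hμ.measure_closedBall_ne_zero c hs hs1
    · obtain ⟨c, s, hs, -, hcs⟩ := hball n
      exact hcs ▸ hμ.measure_closedBall_ne_top c hs
    · simpa only [pow_zero, ENNReal.one_rpow, mul_one, ballChain] using hT x hx 0
  refine ediam_le (Set.forall_mem_image.2 fun x hx => Set.forall_mem_image.2 fun x' hx' => ?_)
  rw [two_mul]
  exact (edist_triangle_left _ _ (φ y₀)).trans (add_le_add (key x hx) (key x' hx'))

lemma exists_tsum_meanOsc_weight_le (hφ : Continuous φ) (hr : 0 < r) (x₀ : X) :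
    ∃ t ∈ Set.Icc r (2 * r), ∑' j : ℕ, ∫⁻ y in {y | dist (dist y x₀) t ≤ 4 * r / 2 ^ j},
        ENNReal.ofReal (2 ^ (ε * j) * (r / 2 ^ j) ^ (-(2 * d))) *
          localEnergy μ φ q (8 * r / 2 ^ j) y ∂μ.restrict (closedBall x₀ (4 * r)) ≤
      8 * multiscaleEnergy μ φ q d ε r x₀ := by
  have hmeas := measurable_localEnergy (μ := μ) (measurable_edist_comp hφ) q
  obtain ⟨t, ht, hle⟩ := exists_mem_Icc_tsum_setLIntegral_dist_le
    (μ := μ.restrict (closedBall x₀ (4 * r))) (f := fun y => dist y x₀)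
    (measurable_id.dist measurable_const) (fun j : ℕ => 4 * r / 2 ^ j)
    (fun j => (hmeas (8 * r / 2 ^ j)).const_mul
      (ENNReal.ofReal (2 ^ (ε * j) * (r / 2 ^ j) ^ (-(2 * d))))) (a := r) (b := 2 * r) (by linarith)
  refine ⟨t, ht, hle.trans_eq ?_⟩
  rw [multiscaleEnergy, ← ENNReal.tsum_mul_left]
  refine tsum_congr fun j => ?_
  rw [lintegral_const_mul _ (hmeas _), ← mul_assoc, ← mul_assoc,
    ← ENNReal.ofReal_mul (div_nonneg (by positivity) (by linarith)), ← ENNReal.ofReal_ofNat 8,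
    ← ENNReal.ofReal_mul (by positivity)]
  congr 2
  rw [sub_one_mul, Real.rpow_sub two_pos, Real.rpow_natCast, two_mul r, add_sub_cancel_right]
  field_simp
  norm_num

theorem exists_ediam_image_sphere_rpow_le (hμ : IsAhlforsRegular μ d A) (hd : 0 ≤ d) (hq : 0 < q)
    (hε : 0 < ε) (hφ : Continuous φ) :
    ∃ C : ℝ≥0∞, C ≠ ⊤ ∧ ∀ (x₀ : X) (r : ℝ), 0 < r → 4 * r ≤ 1 → ∃ t ∈ Set.Icc r (2 * r),
      ediam (φ '' sphere x₀ t) ^ q ≤ C * multiscaleEnergy μ φ q d ε r x₀ := by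
  set D : ℝ≥0∞ := A ^ 2 * ENNReal.ofReal (8 ^ d) + 1
  set η : ℝ≥0∞ := ENNReal.ofReal (2 ^ (-ε / q))
  have hη : η < 1 := by
    rw [← ENNReal.ofReal_one]
    exact ENNReal.ofReal_lt_ofReal_iff_of_nonneg (by positivity) |>.2
      (Real.rpow_lt_one_of_one_lt_of_neg one_lt_two (div_neg_of_neg_of_pos (neg_lt_zero.2 hε) hq))
  refine ⟨2 ^ q * (2 ^ q * (D * (A ^ 2 * 8)) / (1 - η) ^ q), ?_, fun x₀ r hr hr1 => ?_⟩
  · have : 1 - η ≠ 0 := (tsub_pos_of_lt hη).ne'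
    finiteness
  obtain ⟨t, ht, hsum⟩ := exists_tsum_meanOsc_weight_le (μ := μ) (q := q) (d := d) (ε := ε) hφ hr x₀
  refine ⟨t, ht, ?_⟩
  set E := multiscaleEnergy μ φ q d ε r x₀
  have hT : ∀ x ∈ sphere x₀ t, ∀ j,
      meanOsc μ φ q (ballChain x₀ x r j) ≤ A ^ 2 * 8 * E * (η ^ j) ^ q := fun x hx j => by
    have hxt : dist x x₀ = t := hx
    rw [mul_assoc (_ ^ 2)]
    exact meanOsc_ballChain_le_geometric hμ hd hq hr hr1 (hxt ▸ ht.1) (hxt ▸ ht.2) (hxt ▸ hsum) j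
  calc ediam (φ '' sphere x₀ t) ^ q
    _ ≤ (2 * ((2 ^ q * (D * (A ^ 2 * 8 * E))) ^ q⁻¹ / (1 - η))) ^ q := by
      gcongr
      exact ediam_image_sphere_le_of_meanOsc_le hμ hd hq hφ hr hr1 ht.2 hη.le hT
    _ = 2 ^ q * (2 ^ q * (D * (A ^ 2 * 8)) / (1 - η) ^ q) * E := by
      rw [ENNReal.mul_rpow_of_nonneg _ _ hq.le, ENNReal.div_rpow_of_nonneg _ _ hq.le,
        ENNReal.rpow_inv_rpow hq.ne', div_eq_mul_inv, div_eq_mul_inv]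
      ring

end LocalEnergy

section QuasiMonotone

open Metric

variable {X Y : Type*} [PseudoMetricSpace X]

/-- Up to scale `R`, the diameter of the image of a ball is controlled by that of the image of the
sphere bounding it, as for functions that are monotone in the sense of Lebesgue. -/
def QuasiMonotone [PseudoEMetricSpace Y] (φ : X → Y) (R : ℝ) : Prop :=
  ∀ x, ∀ r ≤ R, ediam (φ '' closedBall x r) ≤ 2 * ediam (φ '' sphere x r)

lemma subset_ball_or_disjoint_closedBall {K : Set X} (hK : IsPreconnected K) {x : X} {r : ℝ}
    (hKr : Disjoint K (sphere x r)) : K ⊆ ball x r ∨ Disjoint K (closedBall x r) := by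
  rw [← Set.subset_compl_iff_disjoint_right]
  refine hK.subset_or_subset isOpen_ball isClosed_closedBall.isOpen_compl
    (disjoint_compl_right.mono_left ball_subset_closedBall) fun y hy => ?_
  have : dist y x ≠ r := Set.disjoint_left.1 hKr hy
  exact this.lt_or_gt.imp id not_le.2

/-- The image of the sphere lies in a ball `closedBall c ρ`. Its complement is connected and not
contained in the image of the open ball, so it is the image of a set outside of the ball, and
`closedBall c ρ` contains the image of the ball as well. -/
lemma ediam_image_closedBall_le_two_mul [PreconnectedSpace X] [PseudoMetricSpace Y]
    (hY : ∀ (c : Y) (ρ : ℝ), IsPreconnected (closedBall c ρ)ᶜ) (φ : X ≃ₜ Y) {x : X} {r : ℝ}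
    (hb : Bornology.IsBounded (φ '' sphere x r))
    (hout : ∀ y ∈ closedBall x r, ∃ z ∉ closedBall x r, diam (φ '' sphere x r) < dist (φ z) (φ y)) :
    ediam (φ '' closedBall x r) ≤ 2 * ediam (φ '' sphere x r) := by
  rcases (sphere x r).eq_empty_or_nonempty with hempty | ⟨s, hs⟩
  · rcases subset_ball_or_disjoint_closedBall isPreconnected_univ (hempty ▸ Set.disjoint_empty _)
      with huniv | hdisj
    · obtain ⟨z, hz, -⟩ := hout x (ball_subset_closedBall (huniv trivial))
      exact absurd (ball_subset_closedBall (huniv trivial)) hz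
    · simp [Set.univ_disjoint.1 hdisj]
  have hsphere : ∀ y ∈ sphere x r, dist (φ y) (φ s) ≤ diam (φ '' sphere x r) := fun y hy =>
    dist_le_diam_of_mem hb ⟨y, hy, rfl⟩ ⟨s, hs, rfl⟩
  rcases subset_ball_or_disjoint_closedBall
    (φ.isPreconnected_preimage.2 (hY (φ s) (diam (φ '' sphere x r))))
    (Set.disjoint_left.2 fun y hy hys => hy (hsphere y hys)) with hin | hdisj
  · obtain ⟨z, hz, hzs⟩ := hout s (sphere_subset_closedBall hs)
    exact absurd (ball_subset_closedBall (hin hzs.not_ge)) hz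
  · refine (ediam_mono (Set.image_subset_iff.2 fun y hy => ?_)).trans
      (ediam_closedEBall_le (x := φ s))
    rw [Set.mem_preimage, mem_closedEBall, edist_dist, ← ENNReal.ofReal_toReal hb.ediam_ne_top]
    exact ENNReal.ofReal_le_ofReal (not_not.1 (Set.disjoint_right.1 hdisj hy))

theorem exists_quasiMonotone [CompactSpace X] [PreconnectedSpace X] [MetricSpace Y] [Nontrivial Y]
    (hY : ∀ (c : Y) (ρ : ℝ), IsPreconnected (closedBall c ρ)ᶜ) (φ : X ≃ₜ Y) :
    ∃ R > 0, QuasiMonotone φ R := by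
  have : CompactSpace Y := φ.compactSpace
  obtain ⟨ε, hε, hfar⟩ : ∃ ε > 0, ∀ c : Y, ∃ y, 2 * ε < dist y c := by
    obtain ⟨p, p', hp⟩ := exists_pair_ne Y
    refine ⟨dist p p' / 6, div_pos (dist_pos.2 hp) (by norm_num), fun c => ?_⟩
    by_contra! h
    linarith [dist_triangle_right p p' c, h p, h p', dist_pos.2 hp]
  obtain ⟨R, hR, hφR⟩ := Metric.uniformContinuous_iff.1
    (CompactSpace.uniformContinuous_of_continuous φ.continuous) ε hε
  refine ⟨R / 2, half_pos hR, fun x r hr =>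
    ediam_image_closedBall_le_two_mul hY φ isBounded_of_compactSpace fun y hy => ?_⟩
  have hball : ∀ y ∈ closedBall x r, ∀ z ∈ closedBall x r, dist (φ y) (φ z) ≤ 2 * ε :=
    fun y hy z hz => by
      have hyx : dist (φ y) (φ x) < ε := hφR ((mem_closedBall.1 hy).trans_lt (by linarith))
      have hzx : dist (φ z) (φ x) < ε := hφR ((mem_closedBall.1 hz).trans_lt (by linarith))
      linarith [dist_triangle_right (φ y) (φ z) (φ x)]
  have hdiam : diam (φ '' sphere x r) ≤ 2 * ε := diam_le_of_forall_dist_le (by positivity) <|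
    Set.forall_mem_image.2 fun y hy => Set.forall_mem_image.2 fun z hz =>
      hball y (sphere_subset_closedBall hy) z (sphere_subset_closedBall hz)
  obtain ⟨w, hw⟩ := hfar (φ y)
  rw [← φ.apply_symm_apply w] at hw
  exact ⟨φ.symm w, fun hw' => (hball _ hw' y hy).not_gt hw, hdiam.trans_lt hw⟩

end QuasiMonotone

section Caps

open Metric
open scoped RealInnerProductSpace

variable {E : Type*} [NormedAddCommGroup E] [InnerProductSpace ℝ E]

lemma starConvex_cone {e : E} (he : ‖e‖ = 1) {a : ℝ} (ha₀ : -1 ≤ a) (ha₁ : a < 1) :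
    StarConvex ℝ e {v : E | a * ‖v‖ < ⟪v, e⟫} := by
  intro v hv s t hs ht hst
  have hee : ⟪e, e⟫ = 1 := by rw [real_inner_self_eq_norm_sq, he, one_pow]
  have hv' : a * ‖v‖ < ⟪v, e⟫ := hv
  have hnorm : |‖s • e + t • v‖ - t * ‖v‖| ≤ s := by
    have := abs_norm_sub_norm_le (s • e + t • v) (t • v)
    rwa [add_sub_cancel_right, norm_smul, norm_smul, he, mul_one, Real.norm_of_nonneg hs,
      Real.norm_of_nonneg ht] at this
  have hle : a * (‖s • e + t • v‖ - t * ‖v‖) ≤ s := by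
    rw [abs_le] at hnorm
    nlinarith
  rw [Set.mem_ofPred_eq, inner_add_left, real_inner_smul_left, real_inner_smul_left, hee]
  rcases ht.eq_or_lt with rfl | ht'
  · simpa [norm_smul, he, show s = 1 by linarith] using ha₁
  · nlinarith [mul_lt_mul_of_pos_left hv' ht']

/-- An open cap of the unit sphere is the radial projection of a cone that is star-convex about
the axis. -/
lemma isPreconnected_sphere_inter_lt_inner (hE : 1 < Module.rank ℝ E) {e : E} (he : ‖e‖ = 1)
    (a : ℝ) : IsPreconnected (sphere (0 : E) 1 ∩ {x | a < ⟪x, e⟫}) := by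
  have hinner : ∀ x ∈ sphere (0 : E) 1, |⟪x, e⟫| ≤ 1 := fun x hx => by
    simpa [he, mem_sphere_zero_iff_norm.1 hx] using abs_real_inner_le_norm x e
  rcases lt_or_ge a (-1) with ha | ha₀
  · have hall : sphere (0 : E) 1 ∩ {x | a < ⟪x, e⟫} = sphere 0 1 :=
      Set.inter_eq_left.2 fun x hx => ha.trans_le (abs_le.1 (hinner x hx)).1
    rw [hall]
    exact isPreconnected_sphere hE 0 1
  rcases le_or_gt 1 a with ha | ha₁
  · have hnone : sphere (0 : E) 1 ∩ {x | a < ⟪x, e⟫} = ∅ :=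
      Set.eq_empty_of_forall_notMem fun x hx => ((abs_le.1 (hinner x hx.1)).2.trans ha).not_gt hx.2
    rw [hnone]
    exact isPreconnected_empty
  set K : Set E := {v | a * ‖v‖ < ⟪v, e⟫}
  have hK₀ : ∀ v ∈ K, ‖v‖ ≠ 0 := fun v hv h => by
    simp [K, norm_eq_zero.1 h] at hv
  have hcap : sphere (0 : E) 1 ∩ {x | a < ⟪x, e⟫} = (fun v => ‖v‖⁻¹ • v) '' K := by
    ext x
    refine ⟨fun ⟨hx, hax⟩ => ⟨x, ?_, ?_⟩, ?_⟩
    · simpa [K, mem_sphere_zero_iff_norm.1 hx] using hax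
    · simp [mem_sphere_zero_iff_norm.1 hx]
    · rintro ⟨v, hv, rfl⟩
      have hpos : 0 < ‖v‖ := (norm_nonneg v).lt_of_ne' (hK₀ v hv)
      refine ⟨?_, ?_⟩
      · simp [norm_smul, hpos.ne']
      · rw [Set.mem_ofPred_eq, real_inner_smul_left, ← div_eq_inv_mul, lt_div_iff₀ hpos]
        exact hv
  have hconn : IsPreconnected K :=
    ((starConvex_cone he ha₀ ha₁).isPathConnected (by simpa [he] using ha₁)).isConnected.2
  rw [hcap]
  exact hconn.image _ ((continuousOn_id.norm.inv₀ hK₀).smul continuousOn_id)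

lemma isPreconnected_compl_closedBall_sphere (hE : 1 < Module.rank ℝ E) (c : sphere (0 : E) 1)
    (ρ : ℝ) : IsPreconnected (closedBall c ρ)ᶜ := by
  have hnorm : ∀ x : sphere (0 : E) 1, ‖(x : E)‖ = 1 := norm_eq_of_mem_sphere
  have hdist : ∀ x : sphere (0 : E) 1, dist x c ^ 2 = 2 + 2 * ⟪(x : E), -c⟫ := fun x => by
    rw [Subtype.dist_eq, dist_eq_norm, norm_sub_sq_real, hnorm, hnorm, inner_neg_right]
    ring
  rcases lt_or_ge ρ 0 with hρ | hρ
  · rw [closedBall_eq_empty.2 hρ, Set.compl_empty]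
    exact (Subtype.preconnectedSpace (isPreconnected_sphere hE 0 1)).isPreconnected_univ
  have hval : Subtype.val '' (closedBall c ρ)ᶜ =
      sphere (0 : E) 1 ∩ {x | (ρ ^ 2 - 2) / 2 < ⟪x, -(c : E)⟫} := by
    rw [← Subtype.image_preimage_coe]
    congr 1
    ext x
    rw [Set.mem_compl_iff, mem_closedBall, not_le,
      ← pow_lt_pow_iff_left₀ hρ dist_nonneg two_ne_zero, hdist, Set.mem_preimage, Set.mem_ofPred_eq]
    constructor <;> intro h <;> linarith
  rw [← Topology.IsInducing.subtypeVal.isPreconnected_image, hval]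
  exact isPreconnected_sphere_inter_lt_inner hE (by rw [norm_neg, hnorm]) _

end Caps

section Gagliardo

open Metric

lemma sum_range_ite_pow_le {s b : ℝ} (hs : 1 < s) (hb : 0 ≤ b) (n : ℕ) :
    ∑ m ∈ Finset.range n, (if s ^ m ≤ b then s ^ m else 0) ≤ s / (s - 1) * b := by
  have : 0 < s - 1 := sub_pos.2 hs
  induction n with
  | zero => simp only [Finset.range_zero, Finset.sum_empty]; positivity
  | succ n ih =>
    by_cases h : s ^ n ≤ b
    · calc ∑ m ∈ Finset.range (n + 1), (if s ^ m ≤ b then s ^ m else 0)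
        _ ≤ ∑ m ∈ Finset.range (n + 1), s ^ m := by
          gcongr with m
          split_ifs
          exacts [le_rfl, by positivity]
        _ = (s ^ (n + 1) - 1) / (s - 1) := geom_sum_eq hs.ne' _
        _ ≤ s * s ^ n / (s - 1) := by rw [pow_succ']; gcongr; linarith
        _ ≤ s / (s - 1) * b := by rw [mul_div_right_comm]; gcongr
    · rwa [Finset.sum_range_succ, if_neg h, add_zero]

lemma tsum_indicator_closedBall_le {X : Type*} [MetricSpace X] {α M : ℝ} (hα : 0 < α) (hM : 0 ≤ M)
    {y z : X} (hyz : y ≠ z) :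
    ∑' m : ℕ, (closedBall y (M / 2 ^ m)).indicator (fun _ => ENNReal.ofReal (2 ^ (α * m))) z ≤
      ENNReal.ofReal (2 ^ α / (2 ^ α - 1) * M ^ α) / edist y z ^ α := by
  have hs : (1 : ℝ) < 2 ^ α := Real.one_lt_rpow one_lt_two hα
  have hyz' : 0 < dist y z := dist_pos.2 hyz
  set b : ℝ := (M / dist y z) ^ α
  have hterm : ∀ m : ℕ,
      (closedBall y (M / 2 ^ m)).indicator (fun _ => ENNReal.ofReal (2 ^ (α * m))) z ≤
        ENNReal.ofReal (if ((2 : ℝ) ^ α) ^ m ≤ b then (2 ^ α) ^ m else 0) := fun m => by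
    by_cases hz : z ∈ closedBall y (M / 2 ^ m)
    · have hle : ((2 : ℝ) ^ α) ^ m ≤ b := by
        rw [Real.rpow_pow_comm two_pos.le]
        refine Real.rpow_le_rpow (by positivity) ?_ hα.le
        rw [mem_closedBall', le_div_iff₀ (by positivity)] at hz
        rwa [le_div_iff₀ hyz', mul_comm]
      rw [Set.indicator_of_mem hz, if_pos hle, Real.rpow_mul_natCast two_pos.le]
    · rw [Set.indicator_of_notMem hz]
      exact bot_le
  refine ENNReal.tsum_le_of_sum_range_le fun n => (Finset.sum_le_sum fun m _ => hterm m).trans ?_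
  rw [edist_dist, ENNReal.ofReal_rpow_of_pos hyz', ← ENNReal.ofReal_div_of_pos (by positivity),
    mul_div_assoc, ← Real.div_rpow hM hyz'.le,
    ← ENNReal.ofReal_sum_of_nonneg fun m _ => by split_ifs <;> positivity]
  exact ENNReal.ofReal_le_ofReal (sum_range_ite_pow_le hs (by positivity) n)

variable {X Y : Type*} [MetricSpace X] [MeasurableSpace X] [PseudoEMetricSpace Y]
  {μ : Measure X} {φ : X → Y} {q d α ε M R : ℝ} {A : ℝ≥0}

/-- The Gagliardo double integral of `φ`, with the power `q` of the increments and the power `α` of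
the distances. Its kernel vanishes on the diagonal for `0 < q`, as `0 / 0 = 0` in `ℝ≥0∞`. -/
def gagliardo (μ : Measure X) (φ : X → Y) (q α : ℝ) : ℝ≥0∞ :=
  ∫⁻ x, ∫⁻ y, edist (φ x) (φ y) ^ q / edist x y ^ α ∂μ ∂μ

variable [OpensMeasurableSpace X] [SecondCountableTopology X]

lemma tsum_localEnergy_le_kernel (hq : 0 < q) (hα : 0 < α) (hM : 0 ≤ M)
    (hφ : Continuous φ) (y : X) :
    ∑' m : ℕ, ENNReal.ofReal (2 ^ (α * m)) * localEnergy μ φ q (M / 2 ^ m) y ≤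
      ENNReal.ofReal (2 ^ α / (2 ^ α - 1) * M ^ α) *
        ∫⁻ z, edist (φ y) (φ z) ^ q / edist y z ^ α ∂μ := by
  have hmeas : Measurable fun z => edist (φ y) (φ z) ^ q :=
    ((measurable_edist_comp hφ).comp measurable_prodMk_left).pow_const q
  have hind : ∀ m : ℕ, Measurable
      ((closedBall y (M / 2 ^ m)).indicator fun _ => ENNReal.ofReal (2 ^ (α * m))) :=
    fun m => measurable_const.indicator measurableSet_closedBall
  have hterm : ∀ m : ℕ, ENNReal.ofReal (2 ^ (α * m)) * localEnergy μ φ q (M / 2 ^ m) y =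
      ∫⁻ z, (closedBall y (M / 2 ^ m)).indicator (fun _ => ENNReal.ofReal (2 ^ (α * m))) z *
        edist (φ y) (φ z) ^ q ∂μ := fun m => by
    rw [localEnergy, ← lintegral_const_mul _ hmeas, ← lintegral_indicator measurableSet_closedBall]
    simp only [Set.indicator_mul_left]
  simp only [hterm]
  rw [← lintegral_tsum fun m => Measurable.aemeasurable (by fun_prop),
    ← lintegral_const_mul' _ _ ENNReal.ofReal_ne_top]
  refine lintegral_mono fun z => ?_
  rw [ENNReal.tsum_mul_right]
  rcases eq_or_ne y z with rfl | hyz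
  · simp [hq]
  · rw [← mul_div_assoc, mul_comm _ (_ ^ q), mul_comm _ (_ ^ q), mul_div_assoc]
    gcongr
    exact tsum_indicator_closedBall_le hα hM hyz

lemma tsum_lintegral_localEnergy_le [SFinite μ] (hq : 0 < q)
    (hα : 0 < α) (hM : 0 ≤ M) (hφ : Continuous φ) :
    ∑' m : ℕ, ENNReal.ofReal (2 ^ (α * m)) * ∫⁻ y, localEnergy μ φ q (M / 2 ^ m) y ∂μ ≤
      ENNReal.ofReal (2 ^ α / (2 ^ α - 1) * M ^ α) * gagliardo μ φ q α := by
  have hmeas := measurable_localEnergy (μ := μ) (measurable_edist_comp hφ) q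
  simp only [← lintegral_const_mul _ (hmeas _)]
  rw [← lintegral_tsum fun m => ((hmeas _).const_mul _).aemeasurable, gagliardo,
    ← lintegral_const_mul' _ _ ENNReal.ofReal_ne_top]
  exact lintegral_mono fun y => tsum_localEnergy_le_kernel hq hα hM hφ y

lemma exists_ediam_image_closedBall_rpow_le [SFinite μ]
    (hμ : IsAhlforsRegular μ d A) (hd : 0 ≤ d) (hq : 0 < q) (hε : 0 < ε) (hφ : Continuous φ)
    (hφR : QuasiMonotone φ R) :
    ∃ C : ℝ≥0∞, C ≠ ⊤ ∧ ∀ (x : X) (r : ℝ), 0 < r → 4 * r ≤ 1 → 2 * r ≤ R →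
      ediam (φ '' closedBall x r) ^ q ≤ C * multiscaleEnergy μ φ q d ε r x := by
  obtain ⟨C, hC, h⟩ := exists_ediam_image_sphere_rpow_le hμ hd hq hε hφ
  refine ⟨2 ^ q * C, by finiteness, fun x r hr hr1 hrR => ?_⟩
  obtain ⟨t, ht, hle⟩ := h x r hr hr1
  calc ediam (φ '' closedBall x r) ^ q
    _ ≤ (2 * ediam (φ '' sphere x t)) ^ q := by
      gcongr
      exact (ediam_mono (Set.image_mono (closedBall_subset_closedBall ht.1))).trans
        (hφR x t (ht.2.trans hrR))
    _ ≤ 2 ^ q * C * multiscaleEnergy μ φ q d ε r x := by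
      rw [ENNReal.mul_rpow_of_nonneg _ _ hq.le, mul_assoc]
      gcongr

end Gagliardo

section Sums

lemma tsum_add_nat_lt_top_iff {a : ℕ → ℝ≥0∞} (ha : ∀ k, a k ≠ ⊤) (n : ℕ) :
    ∑' k, a (k + n) < ⊤ ↔ ∑' k, a k < ⊤ := by
  rw [← ENNReal.summable.sum_add_tsum_nat_add' (f := a) (k := n), ENNReal.add_lt_top]
  exact (and_iff_right (ENNReal.sum_lt_top.2 fun k _ => (ha k).lt_top)).symm

lemma tsum_tsum_pow_mul_le (β : ℝ≥0∞) (g : ℕ → ℝ≥0∞) :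
    ∑' (k : ℕ) (j : ℕ), β ^ j * g (k + j) ≤ (∑' j : ℕ, β ^ j) * ∑' m, g m := by
  rw [ENNReal.tsum_comm, ← ENNReal.tsum_mul_right]
  refine ENNReal.tsum_le_tsum fun j => ?_
  rw [ENNReal.tsum_mul_left]
  exact mul_le_mul_right (ENNReal.tsum_comp_le_tsum_of_injective (add_left_injective j) g) _

lemma sum_setLIntegral_le {X ι : Type*} [MeasurableSpace X] {μ : Measure X} [Fintype ι]
    {s : ι → Set X} (hs : ∀ i, MeasurableSet (s i)) {N : ℕ} (hN : ∀ y, {i | y ∈ s i}.ncard ≤ N)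
    {h : X → ℝ≥0∞} (hh : Measurable h) : ∑ i, ∫⁻ y in s i, h y ∂μ ≤ N * ∫⁻ y, h y ∂μ := by
  classical
  simp only [← lintegral_indicator (hs _)]
  rw [← lintegral_finsetSum _ fun i _ => hh.indicator (hs i), ← lintegral_const_mul _ hh]
  refine lintegral_mono fun y => ?_
  simp only [Set.indicator_apply]
  rw [Finset.sum_ite, Finset.sum_const, Finset.sum_const_zero, add_zero, nsmul_eq_mul,
    ← Set.ncard_coe_finset, Finset.coe_filter_univ]
  gcongr
  exact hN y

end Sums

section DyadicSystem

open Metric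

/-- A system of finite families of pieces of diameter comparable to `1 / 2 ^ k`, one family for each
generation `k`. The balls `closedBall (center k Q) (M / 2 ^ k)` around the pieces have bounded
overlap even after enlargement, and any two points that are close at scale `1 / 2 ^ k` are joined by
a chain of `L` links, each of which lies in a piece. -/
structure IsDyadicSystem {X : Type*} [PseudoMetricSpace X] {ι : ℕ → Type*}
    (piece : ∀ k, ι k → Set X) (center : ∀ k, ι k → X) (M : ℝ) (N L : ℕ) : Prop where
  pos : 0 < M
  subset_closedBall : ∀ k Q, piece k Q ⊆ closedBall (center k Q) (M / 2 ^ k)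
  ncard_le : ∀ k y, {Q | dist y (center k Q) ≤ 4 * (M / 2 ^ k)}.ncard ≤ N
  exists_chain : ∀ k x y, M * dist x y ≤ (2 ^ k)⁻¹ → ∃ u : ℕ → X, u 0 = x ∧ u L = y ∧
    ∀ i < L, ∃ Q, u i ∈ piece k Q ∧ u (i + 1) ∈ piece k Q

variable {X Y : Type*} [MetricSpace X] [MeasurableSpace X] {ι : ℕ → Type*} [∀ k, Fintype (ι k)]
  {piece : ∀ k, ι k → Set X} {center : ∀ k, ι k → X} {M : ℝ} {N L : ℕ}
  {μ : Measure X} {q d α ε R : ℝ} {A : ℝ≥0}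

section EnergySum

variable [PseudoEMetricSpace Y] {φ : X → Y} [OpensMeasurableSpace X] [SecondCountableTopology X]
  [SFinite μ]

lemma sum_multiscaleEnergy_le (h : IsDyadicSystem piece center M N L)
    (hα : α = 2 * ε - 1 + 2 * d) (hφ : Continuous φ) (k : ℕ) :
    ENNReal.ofReal (2 ^ (k * (α - 2 * d))) *
        ∑ Q, multiscaleEnergy μ φ q d ε (M / 2 ^ k) (center k Q) ≤
      ENNReal.ofReal (M ^ (-(2 * d))) * N * ∑' j : ℕ, ENNReal.ofReal (2 ^ (-ε)) ^ j *
        (ENNReal.ofReal (2 ^ (α * (k + j : ℕ))) *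
          ∫⁻ y, localEnergy μ φ q (8 * M / 2 ^ (k + j)) y ∂μ) := by
  have hM := h.pos
  have hweight : ∀ j : ℕ, (2 : ℝ) ^ (k * (α - 2 * d)) *
      (2 ^ ((ε - 1) * j) * (M / 2 ^ k / 2 ^ j) ^ (-(2 * d))) =
        M ^ (-(2 * d)) * ((2 ^ (-ε)) ^ j * 2 ^ (α * (k + j : ℕ))) := fun j => by
    rw [div_div, ← pow_add, Real.div_rpow hM.le (by positivity), ← Real.rpow_natCast_mul two_pos.le,
      ← Real.rpow_mul_natCast two_pos.le, div_eq_mul_inv, ← Real.rpow_neg two_pos.le,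
      mul_left_comm, mul_left_comm _ (M ^ _), mul_left_comm _ (M ^ _), ← Real.rpow_add two_pos,
      ← Real.rpow_add two_pos, ← Real.rpow_add two_pos]
    congr 2
    push_cast
    rw [hα]
    ring
  simp only [multiscaleEnergy]
  rw [← Summable.tsum_finsetSum fun _ _ => ENNReal.summable, ← ENNReal.tsum_mul_left,
    ← ENNReal.tsum_mul_left]
  refine ENNReal.tsum_le_tsum fun j => ?_
  rw [← Finset.mul_sum, ← mul_assoc, ← ENNReal.ofReal_mul (by positivity), hweight,
    ENNReal.ofReal_mul (by positivity), ENNReal.ofReal_mul (by positivity),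
    ENNReal.ofReal_pow (by positivity),
    show 8 * (M / 2 ^ k) / 2 ^ j = 8 * M / 2 ^ (k + j) by rw [pow_add]; field_simp]
  have hoverlap := sum_setLIntegral_le (μ := μ) (fun _ => measurableSet_closedBall)
    (fun y => h.ncard_le k y)
    (measurable_localEnergy (μ := μ) (measurable_edist_comp hφ) q (8 * M / 2 ^ (k + j)))
  refine (mul_le_mul_right hoverlap _).trans_eq ?_
  ring

lemma tsum_sum_multiscaleEnergy_lt_top (h : IsDyadicSystem piece center M N L) (hq : 0 < q)
    (hα₀ : 0 < α) (hε : 0 < ε) (hα : α = 2 * ε - 1 + 2 * d) (hφ : Continuous φ)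
    (hfin : gagliardo μ φ q α < ⊤) :
    ∑' k : ℕ, ENNReal.ofReal (2 ^ (k * (α - 2 * d))) *
      ∑ Q, multiscaleEnergy μ φ q d ε (M / 2 ^ k) (center k Q) < ⊤ := by
  refine (ENNReal.tsum_le_tsum (sum_multiscaleEnergy_le h hα hφ)).trans_lt ?_
  rw [ENNReal.tsum_mul_left]
  have hsum : ∑' m : ℕ, ENNReal.ofReal (2 ^ (α * m)) *
      ∫⁻ y, localEnergy μ φ q (8 * M / 2 ^ m) y ∂μ < ⊤ :=
    (tsum_lintegral_localEnergy_le hq hα₀ (mul_nonneg (by norm_num) h.pos.le) hφ).trans_lt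
      (by finiteness)
  have hgeom : ∑' j : ℕ, ENNReal.ofReal (2 ^ (-ε)) ^ j < ⊤ := by
    rw [ENNReal.tsum_geometric, ENNReal.inv_lt_top, tsub_pos_iff_lt, ENNReal.ofReal_lt_one]
    exact Real.rpow_lt_one_of_one_lt_of_neg one_lt_two (neg_lt_zero.2 hε)
  refine ENNReal.mul_lt_top (by finiteness) ((tsum_tsum_pow_mul_le _ fun m : ℕ =>
    ENNReal.ofReal (2 ^ (α * m)) * ∫⁻ y, localEnergy μ φ q (8 * M / 2 ^ m) y ∂μ).trans_lt ?_)
  exact ENNReal.mul_lt_top hgeom hsum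

end EnergySum

theorem tsum_sum_ediam_image_lt_top [CompactSpace X] [OpensMeasurableSpace X]
    [PseudoMetricSpace Y] {φ : X → Y}
    (h : IsDyadicSystem piece center M N L) (hμ : IsAhlforsRegular μ d A) (hd : 0 ≤ d) (hq : 0 < q)
    (hα₀ : 0 < α) (hα : 2 * d - 1 < α) (hφ : Continuous φ) (hR : 0 < R) (hφR : QuasiMonotone φ R)
    (hfin : gagliardo μ φ q α < ⊤) :
    ∑' k : ℕ, ENNReal.ofReal (2 ^ (k * (α - 2 * d))) * ∑ Q, ediam (φ '' piece k Q) ^ q < ⊤ := by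
  have := hμ.isFiniteMeasure
  obtain ⟨ε, hε, hαε⟩ : ∃ ε > 0, α = 2 * ε - 1 + 2 * d :=
    ⟨(α - 2 * d + 1) / 2, by linarith, by ring⟩
  obtain ⟨C, hC, hball⟩ := exists_ediam_image_closedBall_rpow_le hμ hd hq hε hφ hφR
  have hsmall : ∀ᶠ k : ℕ in Filter.atTop, M / 2 ^ k ≤ min (1 / 4) (R / 2) :=
    (tendsto_const_nhds.div_atTop (tendsto_pow_atTop_atTop_of_one_lt one_lt_two)
      ).eventually_le_const (by positivity)
  obtain ⟨n, hn⟩ := Filter.eventually_atTop.1 hsmall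
  have henergy := tsum_sum_multiscaleEnergy_lt_top h hq hα₀ hε hαε hφ hfin
  rw [← tsum_add_nat_lt_top_iff (fun k => ?_) n]
  · refine lt_of_le_of_lt ?_ (ENNReal.mul_lt_top hC.lt_top henergy)
    refine le_trans ?_ (mul_le_mul_right
      (ENNReal.tsum_comp_le_tsum_of_injective (add_left_injective n) _) C)
    rw [← ENNReal.tsum_mul_left]
    refine ENNReal.tsum_le_tsum fun k => ?_
    rw [mul_left_comm, Finset.mul_sum _ _ C]
    gcongr with Q
    have hr := hn (k + n) (Nat.le_add_left n k)
    have hpos := h.pos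
    refine le_trans ?_ (hball (center (k + n) Q) (M / 2 ^ (k + n)) (by positivity)
      (by linarith [hr.trans (min_le_left _ _)]) (by linarith [hr.trans (min_le_right _ _)]))
    gcongr
    exact h.subset_closedBall _ Q
  · exact ENNReal.mul_ne_top ENNReal.ofReal_ne_top <| ENNReal.sum_ne_top.2 fun Q _ =>
      ENNReal.rpow_ne_top_of_nonneg hq.le ((isCompact_range hφ).isBounded.subset
        (Set.image_subset_range φ (piece k Q))).ediam_ne_top

end DyadicSystem

section KernelDomination

open Metric

lemma div_edist_rpow_le {X : Type*} [MetricSpace X] {α : ℝ} (hα : 0 ≤ α) {x y : X}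
    {b : ℝ} (hb : 1 ≤ b * dist x y) (s : ℝ≥0∞) :
    s / edist x y ^ α ≤ ENNReal.ofReal (b ^ α) * s := by
  have hb₀ : 0 < b := pos_of_mul_pos_left (one_pos.trans_le hb) dist_nonneg
  have hxy : 0 < dist x y := pos_of_mul_pos_right (one_pos.trans_le hb) hb₀.le
  rw [mul_comm, div_eq_mul_inv, edist_dist, ENNReal.ofReal_rpow_of_pos hxy,
    ← ENNReal.ofReal_inv_of_pos (by positivity), ← Real.inv_rpow hxy.le]
  gcongr
  rwa [inv_le_iff_one_le_mul₀ hxy]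

variable {X Y : Type*} [MetricSpace X] {ι : ℕ → Type*} {piece : ∀ k, ι k → Set X}
  {center : ∀ k, ι k → X} {M : ℝ} {N L : ℕ}

lemma IsDyadicSystem.mem_closedBall_of_chain (h : IsDyadicSystem piece center M N L) {k : ℕ}
    {u : ℕ → X} (hu : ∀ i < L, ∃ Q, u i ∈ piece k Q ∧ u (i + 1) ∈ piece k Q) {i : ℕ} (hi : i < L)
    {Q : ι k} (hQ : u i ∈ piece k Q) {m : ℕ} (hm : m ≤ L) :
    u m ∈ closedBall (center k Q) ((2 * L + 1) * (M / 2 ^ k)) := by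
  have hpos := h.pos
  have hlink : ∀ n < L, dist (u n) (u (n + 1)) ≤ 2 * (M / 2 ^ k) := fun n hn => by
    obtain ⟨Q', h₁, h₂⟩ := hu n hn
    rw [two_mul]
    exact (dist_triangle_right _ _ (center k Q')).trans
      (add_le_add (h.subset_closedBall k Q' h₁) (h.subset_closedBall k Q' h₂))
  have hdist : ∀ {a b : ℕ}, a ≤ b → b ≤ L → dist (u a) (u b) ≤ 2 * L * (M / 2 ^ k) :=
    fun {a b} hab hb => by
      refine (dist_le_Ico_sum_of_dist_le (d := fun _ => 2 * (M / 2 ^ k)) hab fun {n} _ hn =>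
        hlink n (hn.trans_le hb)).trans ?_
      rw [Finset.sum_const, Nat.card_Ico, nsmul_eq_mul, ← mul_assoc, mul_comm _ (2 : ℝ)]
      gcongr
      exact (Nat.sub_le b a).trans hb
  have hmi : dist (u m) (u i) ≤ 2 * L * (M / 2 ^ k) := by
    rcases le_total m i with hle | hle
    exacts [hdist hle hi.le, dist_comm (u i) (u m) ▸ hdist hle hm]
  have hi' : dist (u i) (center k Q) ≤ M / 2 ^ k := h.subset_closedBall k Q hQ
  rw [mem_closedBall, add_one_mul]
  exact (dist_triangle _ (u i) _).trans (add_le_add hmi hi')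

variable [∀ k, Fintype (ι k)] {q d α R : ℝ}

section Kernel

variable [PseudoEMetricSpace Y] {φ : X → Y}

/-- The sum of the indicators of the squares of the enlarged balls of generation `k`, weighted by
`q`-th powers of the diameters of the images of the pieces. It dominates `edist (φ x) (φ y) ^ q` at
distances `dist x y` comparable to `1 / 2 ^ k`. -/
def dyadicKernel (φ : X → Y) (q : ℝ) (piece : ∀ k, ι k → Set X) (center : ∀ k, ι k → X) (M : ℝ)
    (L k : ℕ) : X × X → ℝ≥0∞ := fun p =>
  ∑ Q, (closedBall (center k Q) ((2 * L + 1) * (M / 2 ^ k)) ×ˢ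
    closedBall (center k Q) ((2 * L + 1) * (M / 2 ^ k))).indicator
      (fun _ => ediam (φ '' piece k Q) ^ q) p

lemma edist_rpow_le_dyadicKernel (h : IsDyadicSystem piece center M N L) (hq : 0 < q) {k : ℕ}
    {x y : X} (hxy : M * dist x y ≤ (2 ^ k)⁻¹) :
    edist (φ x) (φ y) ^ q ≤ (L : ℝ≥0∞) ^ q * dyadicKernel φ q piece center M L k (x, y) := by
  obtain ⟨u, rfl, rfl, hu⟩ := h.exists_chain k x y hxy
  set S := dyadicKernel φ q piece center M L k (u 0, u L)
  have hlink : ∀ i < L, edist (φ (u i)) (φ (u (i + 1))) ≤ S ^ q⁻¹ := fun i hi => by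
    obtain ⟨Q, h₁, h₂⟩ := hu i hi
    rw [ENNReal.le_rpow_inv_iff hq]
    calc edist (φ (u i)) (φ (u (i + 1))) ^ q
      _ ≤ ediam (φ '' piece k Q) ^ q := by
        gcongr
        exact edist_le_ediam_of_mem ⟨_, h₁, rfl⟩ ⟨_, h₂, rfl⟩
      _ ≤ S := by
        have hmem : (u 0, u L) ∈ closedBall (center k Q) ((2 * L + 1) * (M / 2 ^ k)) ×ˢ
            closedBall (center k Q) ((2 * L + 1) * (M / 2 ^ k)) :=
          ⟨h.mem_closedBall_of_chain hu hi h₁ L.zero_le, h.mem_closedBall_of_chain hu hi h₁ le_rfl⟩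
        refine le_trans ?_ (Finset.single_le_sum (fun _ _ => bot_le) (Finset.mem_univ Q))
        exact (Set.indicator_of_mem hmem fun _ => ediam (φ '' piece k Q) ^ q).ge
  calc edist (φ (u 0)) (φ (u L)) ^ q
    _ ≤ (∑ _i ∈ Finset.range L, S ^ q⁻¹) ^ q := by
      gcongr
      exact edist_le_range_sum_of_edist_le (f := φ ∘ u) L fun {i} hi => hlink i hi
    _ = (L : ℝ≥0∞) ^ q * S := by
      rw [Finset.sum_const, Finset.card_range, nsmul_eq_mul, ENNReal.mul_rpow_of_nonneg _ _ hq.le,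
        ENNReal.rpow_inv_rpow hq.ne']

lemma kernel_le_add_tsum_dyadicKernel (h : IsDyadicSystem piece center M N L) (hq : 0 < q)
    (hα : 0 ≤ α) (p : X × X) :
    edist (φ p.1) (φ p.2) ^ q / edist p.1 p.2 ^ α ≤
      ENNReal.ofReal (M ^ α) * ediam (Set.range φ) ^ q +
        (L : ℝ≥0∞) ^ q * ∑' k : ℕ, ENNReal.ofReal ((M * 2 ^ (k + 1)) ^ α) *
          dyadicKernel φ q piece center M L k p := by
  obtain ⟨x, y⟩ := p
  rcases eq_or_ne x y with rfl | hxy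
  · simp [hq]
  rcases le_total 1 (M * dist x y) with hfar | hnear
  · refine le_add_right ((div_edist_rpow_le hα hfar _).trans ?_)
    gcongr
    exact edist_le_ediam_of_mem ⟨x, rfl⟩ ⟨y, rfl⟩
  · obtain ⟨k, hlt, hle⟩ := exists_nat_pow_near_of_lt_one (mul_pos h.pos (dist_pos.2 hxy)) hnear
      (by norm_num : (0 : ℝ) < 2⁻¹) (by norm_num)
    rw [inv_pow] at hlt hle
    refine le_add_left ?_
    calc edist (φ x) (φ y) ^ q / edist x y ^ α
      _ ≤ ENNReal.ofReal ((M * 2 ^ (k + 1)) ^ α) * edist (φ x) (φ y) ^ q := by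
        refine div_edist_rpow_le hα ?_ _
        rw [mul_right_comm]
        exact (inv_le_iff_one_le_mul₀ (by positivity)).1 hlt.le
      _ ≤ ENNReal.ofReal ((M * 2 ^ (k + 1)) ^ α) *
          ((L : ℝ≥0∞) ^ q * dyadicKernel φ q piece center M L k (x, y)) := by
        gcongr
        exact edist_rpow_le_dyadicKernel h hq hle
      _ ≤ _ := by
        rw [mul_left_comm]
        gcongr
        exact ENNReal.le_tsum k

variable [MeasurableSpace X] {μ : Measure X} {A : ℝ≥0}

lemma measurable_dyadicKernel [OpensMeasurableSpace X] (k : ℕ) :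
    Measurable (dyadicKernel φ q piece center M L k) :=
  Finset.measurable_sum _ fun _ _ =>
    measurable_const.indicator (measurableSet_closedBall.prod measurableSet_closedBall)

lemma lintegral_dyadicKernel_le [OpensMeasurableSpace X] [SFinite μ] (hμ : IsAhlforsRegular μ d A)
    (hM : 0 < M) (k : ℕ) :
    ∫⁻ p, dyadicKernel φ q piece center M L k p ∂μ.prod μ ≤
      (A * ENNReal.ofReal (((2 * L + 1) * (M / 2 ^ k)) ^ d)) ^ 2 *
        ∑ Q, ediam (φ '' piece k Q) ^ q := by
  have hball : ∀ Q, MeasurableSet (closedBall (center k Q) ((2 * L + 1) * (M / 2 ^ k))) :=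
    fun Q => measurableSet_closedBall
  simp only [dyadicKernel]
  rw [lintegral_finsetSum _ fun Q _ => measurable_const.indicator ((hball Q).prod (hball Q)),
    Finset.mul_sum]
  refine Finset.sum_le_sum fun Q _ => ?_
  rw [lintegral_indicator_const ((hball Q).prod (hball Q)), Measure.prod_prod, ← sq, mul_comm]
  gcongr
  exact hμ.measure_closedBall_le _ (by positivity)

lemma mul_lintegral_dyadicKernel_le [OpensMeasurableSpace X] [SFinite μ]
    (hμ : IsAhlforsRegular μ d A) (hM : 0 < M) (k : ℕ) :
    ENNReal.ofReal ((M * 2 ^ (k + 1)) ^ α) *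
        ∫⁻ p, dyadicKernel φ q piece center M L k p ∂μ.prod μ ≤
      A ^ 2 * ENNReal.ofReal ((M * 2) ^ α * ((2 * L + 1) * M) ^ (2 * d)) *
        (ENNReal.ofReal (2 ^ (k * (α - 2 * d))) * ∑ Q, ediam (φ '' piece k Q) ^ q) := by
  have hweight : (M * 2 ^ (k + 1)) ^ α * (((2 * L + 1) * (M / 2 ^ k)) ^ d) ^ 2 =
      (M * 2) ^ α * ((2 * L + 1) * M) ^ (2 * d) * 2 ^ (k * (α - 2 * d)) := by
    have hsq : ∀ c > 0, (c : ℝ) ^ (2 * d) = (c ^ d) ^ 2 := fun c hc => by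
      rw [two_mul, Real.rpow_add hc, sq]
    rw [Real.rpow_natCast_mul two_pos.le, Real.rpow_sub (by positivity), hsq _ (by positivity),
      hsq _ (by positivity), ← mul_div_assoc, Real.div_rpow (by positivity) (by positivity),
      show M * 2 ^ (k + 1) = M * 2 * 2 ^ k by ring,
      Real.mul_rpow (x := M * 2) (by positivity) (by positivity)]
    ring
  calc _
    _ ≤ ENNReal.ofReal ((M * 2 ^ (k + 1)) ^ α) *
        ((A * ENNReal.ofReal (((2 * L + 1) * (M / 2 ^ k)) ^ d)) ^ 2 *
          ∑ Q, ediam (φ '' piece k Q) ^ q) := by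
      gcongr
      exact lintegral_dyadicKernel_le hμ hM k
    _ = A ^ 2 * ENNReal.ofReal ((M * 2 ^ (k + 1)) ^ α * (((2 * L + 1) * (M / 2 ^ k)) ^ d) ^ 2) *
        ∑ Q, ediam (φ '' piece k Q) ^ q := by
      rw [mul_pow, ← ENNReal.ofReal_pow (by positivity), ENNReal.ofReal_mul (by positivity)]
      ring
    _ = _ := by
      rw [hweight, ENNReal.ofReal_mul (by positivity)]
      ring

end Kernel

variable [MeasurableSpace X] {μ : Measure X} {A : ℝ≥0}

theorem gagliardo_lt_top_of_tsum_sum_ediam_image [CompactSpace X] [OpensMeasurableSpace X]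
    [PseudoMetricSpace Y] {φ : X → Y} (h : IsDyadicSystem piece center M N L)
    (hμ : IsAhlforsRegular μ d A) (hq : 0 < q) (hα : 0 ≤ α) (hφ : Continuous φ)
    (hfin : ∑' k : ℕ, ENNReal.ofReal (2 ^ (k * (α - 2 * d))) *
      ∑ Q, ediam (φ '' piece k Q) ^ q < ⊤) :
    gagliardo μ φ q α < ⊤ := by
  have := hμ.isFiniteMeasure
  have hM := h.pos
  have hrange : ediam (Set.range φ) ≠ ⊤ := (isCompact_range hφ).isBounded.ediam_ne_top
  have hmeas : ∀ k : ℕ, Measurable fun p => ENNReal.ofReal ((M * 2 ^ (k + 1)) ^ α) *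
      dyadicKernel φ q piece center M L k p := fun k => (measurable_dyadicKernel k).const_mul _
  set c := ENNReal.ofReal (M ^ α) * ediam (Set.range φ) ^ q
  set F : X × X → ℝ≥0∞ := fun p => c + (L : ℝ≥0∞) ^ q * ∑' k : ℕ,
    ENNReal.ofReal ((M * 2 ^ (k + 1)) ^ α) * dyadicKernel φ q piece center M L k p
  have hF : Measurable F := ((Measurable.tsum hmeas).const_mul _).const_add _
  calc gagliardo μ φ q α
    _ ≤ ∫⁻ x, ∫⁻ y, F (x, y) ∂μ ∂μ := lintegral_mono fun x => lintegral_mono fun y =>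
      kernel_le_add_tsum_dyadicKernel h hq hα (x, y)
    _ = ∫⁻ p, F p ∂μ.prod μ := lintegral_lintegral (f := fun x y => F (x, y)) hF.aemeasurable
    _ = c * (μ.prod μ) Set.univ + (L : ℝ≥0∞) ^ q * ∑' k : ℕ,
        ENNReal.ofReal ((M * 2 ^ (k + 1)) ^ α) *
          ∫⁻ p, dyadicKernel φ q piece center M L k p ∂μ.prod μ := by
      rw [lintegral_add_left measurable_const, lintegral_const,
        lintegral_const_mul _ (Measurable.tsum hmeas),
        lintegral_tsum fun k => (hmeas k).aemeasurable]
      simp only [lintegral_const_mul _ (measurable_dyadicKernel _)]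
    _ < ⊤ := by
      refine ENNReal.add_lt_top.2 ⟨by finiteness, ENNReal.mul_lt_top (by finiteness) <|
        (ENNReal.tsum_le_tsum (mul_lintegral_dyadicKernel_le hμ hM)).trans_lt ?_⟩
      rw [ENNReal.tsum_mul_left]
      exact ENNReal.mul_lt_top (by finiteness) hfin

theorem gagliardo_lt_top_iff [CompactSpace X] [OpensMeasurableSpace X] [PseudoMetricSpace Y]
    {φ : X → Y} (h : IsDyadicSystem piece center M N L) (hμ : IsAhlforsRegular μ d A) (hd : 0 ≤ d)
    (hq : 0 < q) (hα₀ : 0 < α) (hα : 2 * d - 1 < α) (hφ : Continuous φ) (hR : 0 < R)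
    (hφR : QuasiMonotone φ R) :
    gagliardo μ φ q α < ⊤ ↔
      ∑' k : ℕ, ENNReal.ofReal (2 ^ (k * (α - 2 * d))) * ∑ Q, ediam (φ '' piece k Q) ^ q < ⊤ :=
  ⟨tsum_sum_ediam_image_lt_top h hμ hd hq hα₀ hα hφ hR hφR,
    gagliardo_lt_top_of_tsum_sum_ediam_image h hμ hq hα₀.le hφ⟩

end KernelDomination

section HausdorffMeasure

open Metric

variable {X Z F : Type*} [MetricSpace X] [MetricSpace Z] [MeasurableSpace Z] [BorelSpace Z]
  {M : ℝ≥0} {d : ℝ} {A : ℝ≥0}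

lemma hausdorffMeasure_preimage_closedBall_le {P : Z → X} (hM : 0 < M)
    (hZ : IsAhlforsRegular (μH[d] : Measure Z) d A) (hP : AntilipschitzWith M P) (x : X) {r : ℝ}
    (hr : 0 < r) : μH[d] (P ⁻¹' closedBall x r) ≤ A * ENNReal.ofReal ((2 * M * r) ^ d) := by
  rcases (P ⁻¹' closedBall x r).eq_empty_or_nonempty with h | ⟨p, hp⟩
  · simp [h]
  refine (measure_mono fun p' hp' => ?_).trans (hZ.measure_closedBall_le p (by positivity))
  calc dist p' p ≤ M * dist (P p') (P p) := hP.le_mul_dist p' p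
    _ ≤ M * (r + r) := by
      gcongr; exact (dist_triangle_right _ _ x).trans (add_le_add hp' hp)
    _ = 2 * M * r := by ring

variable [MeasurableSpace X] [BorelSpace X]

lemma hausdorffMeasure_closedBall_le_of_charts [Fintype F] {P : F → Z → X} (hd : 0 ≤ d)
    (hM : 0 < M) (hZ : IsAhlforsRegular (μH[d] : Measure Z) d A)
    (hlip : ∀ f, LipschitzWith M (P f)) (hanti : ∀ f, AntilipschitzWith M (P f))
    (hP : ∀ x, ∃ f p, P f p = x) (x : X) {r : ℝ} (hr : 0 < r) :
    μH[d] (closedBall x r) ≤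
      ↑(Fintype.card F * M ^ d * A * (2 * M) ^ d) * ENNReal.ofReal (r ^ d) := by
  calc μH[d] (closedBall x r) ≤ μH[d] (⋃ f, P f '' (P f ⁻¹' closedBall x r)) :=
        measure_mono fun y hy => by
          obtain ⟨f, p, rfl⟩ := hP y
          exact Set.mem_iUnion.2 ⟨f, p, hy, rfl⟩
    _ ≤ ∑ f, μH[d] (P f '' (P f ⁻¹' closedBall x r)) := measure_iUnion_fintype_le _ _
    _ ≤ ∑ _f : F, (M : ℝ≥0∞) ^ d * (A * ENNReal.ofReal ((2 * M * r) ^ d)) := by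
        gcongr with f
        refine ((hlip f).hausdorffMeasure_image_le hd _).trans ?_
        gcongr
        exact hausdorffMeasure_preimage_closedBall_le hM hZ (hanti f) x hr
    _ = _ := by
        rw [Real.mul_rpow (by positivity) hr.le, ENNReal.ofReal_mul (by positivity),
          show (2 * M : ℝ) ^ d = ((2 * M) ^ d : ℝ≥0) by push_cast; rfl, ENNReal.ofReal_coe_nnreal]
        simp only [Finset.sum_const, Finset.card_univ, nsmul_eq_mul, ENNReal.coe_mul,
          ENNReal.coe_natCast, ← ENNReal.coe_rpow_of_nonneg _ hd]
        ring

lemma ofReal_rpow_le_hausdorffMeasure_closedBall_of_chart {P : Z → X} (hd : 0 ≤ d) (hM : 1 ≤ M)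
    (hZ : IsAhlforsRegular (μH[d] : Measure Z) d A) (hlip : LipschitzWith M P)
    (hanti : AntilipschitzWith M P) (p : Z) {r : ℝ} (hr : 0 < r) (hr1 : r ≤ 1) :
    ENNReal.ofReal (r ^ d) ≤ ↑(M ^ d * A * M ^ d) * μH[d] (closedBall (P p) r) := by
  have hM₀ : (0 : ℝ) < M := one_pos.trans_le hM
  calc ENNReal.ofReal (r ^ d) = (M : ℝ≥0∞) ^ d * ENNReal.ofReal ((r / M) ^ d) := by
        rw [← ENNReal.coe_rpow_of_nonneg _ hd, ← ENNReal.ofReal_coe_nnreal,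
          ← ENNReal.ofReal_mul (by positivity), NNReal.coe_rpow,
          ← Real.mul_rpow (by positivity) (by positivity), mul_div_cancel₀ _ (by positivity)]
    _ ≤ (M : ℝ≥0∞) ^ d * (A * ((M : ℝ≥0∞) ^ d * μH[d] (closedBall (P p) r))) := by
        gcongr
        refine (hZ.ofReal_rpow_le p (by positivity) (div_le_one_of_le₀ (hr1.trans hM)
          M.2)).trans ?_
        gcongr
        refine (hanti.le_hausdorffMeasure_image hd _).trans ?_
        gcongr
        rintro _ ⟨p', hp', rfl⟩
        exact (hlip.dist_le_mul p' p).trans ((le_div_iff₀' hM₀).1 hp')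
    _ = _ := by
        rw [← ENNReal.coe_rpow_of_nonneg _ hd]; push_cast; ring

lemma exists_isAhlforsRegular_of_charts [Finite F] {P : F → Z → X} (hd : 0 ≤ d) (hM : 1 ≤ M)
    (hZ : IsAhlforsRegular (μH[d] : Measure Z) d A) (hlip : ∀ f, LipschitzWith M (P f))
    (hanti : ∀ f, AntilipschitzWith M (P f)) (hP : ∀ x, ∃ f p, P f p = x) :
    ∃ B, IsAhlforsRegular (μH[d] : Measure X) d B := by
  cases nonempty_fintype F
  refine ⟨max (M ^ d * A * M ^ d) (Fintype.card F * M ^ d * A * (2 * M) ^ d),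
    fun x r hr hr1 => ?_, fun x r hr => ?_⟩
  · obtain ⟨f, p, rfl⟩ := hP x
    refine (ofReal_rpow_le_hausdorffMeasure_closedBall_of_chart hd hM hZ (hlip f) (hanti f) p hr
      hr1).trans ?_
    gcongr
    exact le_max_left _ _
  · refine (hausdorffMeasure_closedBall_le_of_charts hd (one_pos.trans_le hM) hZ hlip hanti hP x
      hr).trans ?_
    gcongr
    exact le_max_right _ _

/-- The unit square `[0,1]²` with the sup metric, the domain of the charts of an atlas. -/
abbrev UnitSquare : Type := ↥(Set.Icc (0 : ℝ) 1 ×ˢ Set.Icc (0 : ℝ) 1)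

lemma ofReal_le_volume_closedBall_inter_Icc {t r : ℝ} (ht : t ∈ Set.Icc (0 : ℝ) 1) (hr : 0 ≤ r)
    (hr1 : r ≤ 1) :
    ENNReal.ofReal r ≤ volume (closedBall t r ∩ Set.Icc 0 1) := by
  rw [Real.closedBall_eq_Icc, Set.Icc_inter_Icc, Real.volume_Icc]
  refine ENNReal.ofReal_le_ofReal ?_
  rw [le_sub_iff_add_le, le_inf_iff, ← le_sub_iff_add_le', ← le_sub_iff_add_le', sup_le_iff,
    sup_le_iff]
  obtain ⟨h0, h1⟩ := ht
  refine ⟨⟨?_, ?_⟩, ?_, ?_⟩ <;> linarith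

lemma hausdorffMeasure_closedBall_unitSquare (p : UnitSquare) (r : ℝ) :
    μH[2] (closedBall p r) = volume (closedBall (p : ℝ × ℝ).1 r ∩ Set.Icc 0 1) *
      volume (closedBall (p : ℝ × ℝ).2 r ∩ Set.Icc 0 1) := by
  rw [← isometry_subtype_coe.hausdorffMeasure_image (Or.inl zero_le_two),
    hausdorffMeasure_prod_real, ← Measure.prod_prod, ← Measure.volume_eq_prod,
    ← Set.prod_inter_prod, closedBall_prod_same, Set.inter_comm]
  congr 1
  exact Subtype.image_preimage_coe _ (closedBall (p : ℝ × ℝ) r)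

lemma isAhlforsRegular_unitSquare : IsAhlforsRegular (μH[2] : Measure UnitSquare) 2 4 := by
  constructor
  · intro p r hr hr1
    rw [hausdorffMeasure_closedBall_unitSquare, Real.rpow_two, sq, ENNReal.ofReal_mul hr.le]
    refine (mul_le_mul' (ofReal_le_volume_closedBall_inter_Icc p.2.1 hr.le hr1)
      (ofReal_le_volume_closedBall_inter_Icc p.2.2 hr.le hr1)).trans ?_
    exact le_mul_of_one_le_left' (by norm_num)
  · intro p r hr
    rw [hausdorffMeasure_closedBall_unitSquare]
    calc _ ≤ volume (closedBall (p : ℝ × ℝ).1 r) * volume (closedBall (p : ℝ × ℝ).2 r) := by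
          gcongr <;> exact Set.inter_subset_left
      _ = _ := by
        rw [Real.volume_closedBall, Real.volume_closedBall, ← ENNReal.ofReal_mul (by positivity),
          ← ENNReal.ofReal_coe_nnreal, ← ENNReal.ofReal_mul (by positivity), Real.rpow_two]
        congr 1
        push_cast
        ring

end HausdorffMeasure

section SquareAtlas

open Metric

lemma exists_mem_Icc_dyadic {t : ℝ} (ht : t ∈ Set.Icc (0 : ℝ) 1) (k : ℕ) :
    ∃ i : Fin (2 ^ k), t ∈ Set.Icc ((i : ℝ) / 2 ^ k) ((i + 1) / 2 ^ k) := by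
  have h2 : (0 : ℝ) < 2 ^ k := by positivity
  rcases ht.2.eq_or_lt with rfl | ht1
  · refine ⟨⟨2 ^ k - 1, by simp⟩, ?_, ?_⟩ <;> simp [div_le_iff₀, h2]
  · refine ⟨⟨⌊t * 2 ^ k⌋₊, (Nat.floor_lt (mul_nonneg ht.1 h2.le)).2 ?_⟩, ?_, ?_⟩
    · push_cast
      nlinarith
    · exact (div_le_iff₀ h2).2 (Nat.floor_le (mul_nonneg ht.1 h2.le))
    · exact (le_div_iff₀ h2).2 (Nat.lt_floor_add_one _).le

lemma exists_mem_Icc_dyadic_inter {t t' : ℝ} (ht : t ∈ Set.Icc (0 : ℝ) 1)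
    (ht' : t' ∈ Set.Icc (0 : ℝ) 1) {k : ℕ} (h : dist t t' ≤ (2 ^ k)⁻¹) :
    ∃ w ∈ Set.Icc (0 : ℝ) 1, ∃ i i' : Fin (2 ^ k),
      t ∈ Set.Icc ((i : ℝ) / 2 ^ k) ((i + 1) / 2 ^ k) ∧
      w ∈ Set.Icc ((i : ℝ) / 2 ^ k) ((i + 1) / 2 ^ k) ∧
      w ∈ Set.Icc ((i' : ℝ) / 2 ^ k) ((i' + 1) / 2 ^ k) ∧
      t' ∈ Set.Icc ((i' : ℝ) / 2 ^ k) ((i' + 1) / 2 ^ k) := by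
  wlog hle : t ≤ t' generalizing t t'
  · obtain ⟨w, hw, i, i', h₁, h₂, h₃, h₄⟩ := this ht' ht (dist_comm t t' ▸ h) (le_of_not_ge hle)
    exact ⟨w, hw, i', i, h₄, h₃, h₂, h₁⟩
  obtain ⟨i, hi⟩ := exists_mem_Icc_dyadic ht k
  rcases le_or_gt t' ((i + 1) / 2 ^ k) with hi' | hi'
  · exact ⟨t, ht, i, i, hi, hi, hi, hi.1.trans hle, hi'⟩
  have hlt : (i + 1 : ℕ) < 2 ^ k := by
    have := hi'.trans_le ht'.2
    rw [div_lt_one (by positivity)] at this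
    exact_mod_cast this
  have hsucc : (i + 1 : ℝ) / 2 ^ k = i / 2 ^ k + (2 ^ k)⁻¹ := by rw [add_div, one_div]
  have hsucc' : (i + 1 + 1 : ℝ) / 2 ^ k = (i + 1) / 2 ^ k + (2 ^ k)⁻¹ := by rw [add_div, one_div]
  have hpos : (0 : ℝ) < (2 ^ k)⁻¹ := by positivity
  rw [dist_comm, Real.dist_eq, abs_of_nonneg (sub_nonneg.2 hle)] at h
  refine ⟨(i + 1) / 2 ^ k, ⟨by positivity, hi'.le.trans ht'.2⟩, i, ⟨i + 1, hlt⟩, hi,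
    ⟨by linarith, le_rfl⟩, ⟨?_, ?_⟩, ⟨?_, ?_⟩⟩ <;> push_cast <;> linarith [hi.2]

lemma exists_mem_dyadicSq_inter {p s : UnitSquare} {k : ℕ} (h : dist p s ≤ (2 ^ k)⁻¹) :
    ∃ m : UnitSquare,
      (∃ i j : Fin (2 ^ k), (p : ℝ × ℝ) ∈ dyadicSq k i j ∧ (m : ℝ × ℝ) ∈ dyadicSq k i j) ∧
      ∃ i j : Fin (2 ^ k), (m : ℝ × ℝ) ∈ dyadicSq k i j ∧ (s : ℝ × ℝ) ∈ dyadicSq k i j := by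
  obtain ⟨h₁, h₂⟩ := max_le_iff.1 h
  obtain ⟨w, hw, i, i', hp, hwi, hwi', hs⟩ := exists_mem_Icc_dyadic_inter p.2.1 s.2.1 h₁
  obtain ⟨v, hv, j, j', hp', hvj, hvj', hs'⟩ := exists_mem_Icc_dyadic_inter p.2.2 s.2.2 h₂
  exact ⟨⟨(w, v), hw, hv⟩, ⟨i, j, ⟨hp, hp'⟩, hwi, hvj⟩, i', j', ⟨hwi', hvj'⟩, hs, hs'⟩

lemma natCast_div_two_pow_mem_Icc {k : ℕ} (i : Fin (2 ^ k)) :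
    (i : ℝ) / 2 ^ k ∈ Set.Icc (0 : ℝ) 1 :=
  ⟨by positivity, div_le_one_of_le₀ (mod_cast i.2.le) (by positivity)⟩

/-- The lower-left corner of `dyadicSq k i j`. -/
def dyadicCorner (k : ℕ) (i j : Fin (2 ^ k)) : UnitSquare :=
  ⟨(i / 2 ^ k, j / 2 ^ k), natCast_div_two_pow_mem_Icc i, natCast_div_two_pow_mem_Icc j⟩

lemma dist_dyadicCorner_le {k : ℕ} {i j : Fin (2 ^ k)} {p : UnitSquare}
    (hp : (p : ℝ × ℝ) ∈ dyadicSq k i j) : dist p (dyadicCorner k i j) ≤ (2 ^ k)⁻¹ := by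
  obtain ⟨⟨h₁, h₂⟩, h₃, h₄⟩ := hp
  rw [add_div, one_div] at h₂ h₄
  refine max_le ?_ ?_ <;> rw [Real.dist_eq, dyadicCorner, abs_of_nonneg (sub_nonneg.2 ‹_›)] <;>
    linarith

lemma dist_dyadicCorner (k : ℕ) (i j i' j' : Fin (2 ^ k)) :
    dist (dyadicCorner k i j) (dyadicCorner k i' j') =
      dist ((i : ℤ), (j : ℤ)) ((i' : ℤ), (j' : ℤ)) / 2 ^ k := by
  have hdiv : ∀ m n : Fin (2 ^ k), dist ((m : ℝ) / 2 ^ k) (n / 2 ^ k) =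
      dist (m : ℤ) (n : ℤ) / 2 ^ k := fun m n => by
    rw [Real.dist_eq, ← sub_div, abs_div, abs_of_pos (by positivity : (0 : ℝ) < 2 ^ k),
      Int.dist_eq]
    norm_cast
  rw [Subtype.dist_eq, Prod.dist_eq, Prod.dist_eq, ← max_div_div_right (by positivity), ← hdiv,
    ← hdiv]
  rfl

lemma ncard_le_of_forall_dist_le {S : Set (ℤ × ℤ)} {n : ℕ}
    (hS : ∀ Q ∈ S, ∀ Q' ∈ S, dist Q Q' ≤ n) : S.ncard ≤ (2 * n + 1) ^ 2 := by
  rcases S.eq_empty_or_nonempty with rfl | ⟨⟨a, b⟩, hQ⟩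
  · simp
  have hsub : S ⊆ ↑(Finset.Icc (a - n) (a + n) ×ˢ Finset.Icc (b - n) (b + n)) := fun Q' hQ' => by
    have := hS Q' hQ' _ hQ
    rw [← mem_closedBall, ← closedBall_prod_same, Int.closedBall_eq_Icc, Int.closedBall_eq_Icc]
      at this
    simpa using this
  refine (Set.ncard_le_ncard hsub).trans_eq ?_
  rw [Set.ncard_coe_finset, Finset.card_product, Int.card_Icc, Int.card_Icc, sq]
  congr 1 <;> omega

variable {X F : Type*} [PseudoMetricSpace X] {P : F → UnitSquare → X} {M : ℝ≥0}

/-- A bi-Lipschitz atlas whose charts are parametrized by the unit square and cover `X`.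
If two points are close, one can pass from the chart at one of them to the chart at the other
through a nearby point common to both charts. -/
structure IsSquareAtlas (P : F → UnitSquare → X) (M : ℝ≥0) : Prop where
  one_le : 1 ≤ M
  lipschitzWith : ∀ f, LipschitzWith M (P f)
  antilipschitzWith : ∀ f, AntilipschitzWith M (P f)
  exists_eq : ∀ x, ∃ f p, P f p = x
  exists_link : ∀ f g p p', M * dist (P f p) (P g p') ≤ 1 → ∃ s s', P f s = P g s' ∧
    dist p s ≤ M * dist (P f p) (P g p') ∧ dist s' p' ≤ M * dist (P f p) (P g p')

/-- The image of the dyadic square `Q.2` of generation `k` under the chart `Q.1`. -/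
def atlasPiece (P : F → UnitSquare → X) (k : ℕ) (Q : F × Fin (2 ^ k) × Fin (2 ^ k)) : Set X :=
  P Q.1 '' (Subtype.val ⁻¹' dyadicSq k Q.2.1 Q.2.2)

/-- A distinguished point of `atlasPiece P k Q`. -/
def atlasCenter (P : F → UnitSquare → X) (k : ℕ) (Q : F × Fin (2 ^ k) × Fin (2 ^ k)) : X :=
  P Q.1 (dyadicCorner k Q.2.1 Q.2.2)

namespace IsSquareAtlas

lemma comp {Y : Type*} [PseudoMetricSpace Y] {Φ : X → Y} {K : ℝ≥0} (h : IsSquareAtlas P M)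
    (hlip : LipschitzWith K Φ) (hanti : AntilipschitzWith K Φ) (hΦ : Function.Surjective Φ) :
    IsSquareAtlas (fun f => Φ ∘ P f) (max K 1 * M) := by
  have hdist : ∀ x y, dist x y ≤ max K 1 * dist (Φ x) (Φ y) := fun x y =>
    (hanti.le_mul_dist x y).trans (by gcongr; exact le_max_left _ _)
  have hM : ∀ x y, M * dist x y ≤ ↑(max K 1 * M) * dist (Φ x) (Φ y) := fun x y => by
    rw [NNReal.coe_mul, mul_comm (max K 1 : ℝ≥0).toReal, mul_assoc]
    exact mul_le_mul_of_nonneg_left (hdist x y) M.2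
  exact
  { one_le := one_le_mul (le_max_right _ _) h.one_le
    lipschitzWith f := (hlip.comp (h.lipschitzWith f)).weaken (by gcongr; exact le_max_left _ _)
    antilipschitzWith f := .of_le_mul_dist fun p p' =>
      ((h.antilipschitzWith f).le_mul_dist p p').trans (hM _ _)
    exists_eq y := by
      obtain ⟨x, rfl⟩ := hΦ y
      obtain ⟨f, p, rfl⟩ := h.exists_eq x
      exact ⟨f, p, rfl⟩
    exists_link f g p p' hpp' := by
      obtain ⟨s, s', hss', hps, hsp'⟩ := h.exists_link f g p p' ((hM _ _).trans hpp')
      exact ⟨s, s', congrArg Φ hss', hps.trans (hM _ _), hsp'.trans (hM _ _)⟩ }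

lemma atlasPiece_subset_closedBall (h : IsSquareAtlas P M) (k : ℕ)
    (Q : F × Fin (2 ^ k) × Fin (2 ^ k)) :
    atlasPiece P k Q ⊆ closedBall (atlasCenter P k Q) (M / 2 ^ k) := by
  rintro _ ⟨p, hp, rfl⟩
  exact ((h.lipschitzWith _).dist_le_mul _ _).trans
    (mul_le_mul_of_nonneg_left (dist_dyadicCorner_le hp) M.2)

lemma dist_index_le (h : IsSquareAtlas P M) {k : ℕ} {x : X} (f : F) {i j i' j' : Fin (2 ^ k)}
    (hi : dist x (P f (dyadicCorner k i j)) ≤ 4 * (M / 2 ^ k))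
    (hi' : dist x (P f (dyadicCorner k i' j')) ≤ 4 * (M / 2 ^ k)) :
    dist ((i : ℤ), (j : ℤ)) ((i' : ℤ), (j' : ℤ)) ≤ 8 * M ^ 2 := by
  have hanti := (h.antilipschitzWith f).le_mul_dist (dyadicCorner k i j) (dyadicCorner k i' j')
  rw [dist_dyadicCorner, div_le_iff₀ (by positivity)] at hanti
  calc dist ((i : ℤ), (j : ℤ)) ((i' : ℤ), (j' : ℤ))
    _ ≤ M * (4 * (M / 2 ^ k) + 4 * (M / 2 ^ k)) * 2 ^ k := by
      refine hanti.trans ?_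
      gcongr
      exact (dist_triangle_left _ _ x).trans (add_le_add hi hi')
    _ = 8 * M ^ 2 := by field_simp; ring

lemma ncard_dist_dyadicCorner_le (h : IsSquareAtlas P M) (k : ℕ) (x : X) (f : F) :
    {Q : Fin (2 ^ k) × Fin (2 ^ k) | dist x (P f (dyadicCorner k Q.1 Q.2)) ≤
      4 * (M / 2 ^ k)}.ncard ≤ (2 * ⌈8 * M ^ 2⌉₊ + 1) ^ 2 := by
  have hinj : Function.Injective
      (Prod.map (fun i : Fin (2 ^ k) => (i : ℤ)) fun j : Fin (2 ^ k) => (j : ℤ)) :=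
    .prodMap (Nat.cast_injective.comp Fin.val_injective) (Nat.cast_injective.comp Fin.val_injective)
  rw [← Set.ncard_image_of_injective _ hinj]
  refine ncard_le_of_forall_dist_le ?_
  rintro _ ⟨Q, hQ, rfl⟩ _ ⟨Q', hQ', rfl⟩
  exact (h.dist_index_le f hQ hQ').trans (mod_cast Nat.le_ceil (8 * M ^ 2))

lemma ncard_dist_atlasCenter_le [Fintype F] (h : IsSquareAtlas P M) (k : ℕ) (x : X) :
    {Q | dist x (atlasCenter P k Q) ≤ 4 * (M / 2 ^ k)}.ncard ≤
      Fintype.card F * (2 * ⌈8 * M ^ 2⌉₊ + 1) ^ 2 := by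
  have hsub : {Q | dist x (atlasCenter P k Q) ≤ 4 * (M / 2 ^ k)} ⊆ ⋃ f, Prod.mk f ''
      {Q | dist x (P f (dyadicCorner k Q.1 Q.2)) ≤ 4 * (M / 2 ^ k)} := fun Q hQ =>
    Set.mem_iUnion.2 ⟨Q.1, Q.2, hQ, rfl⟩
  refine ((Set.ncard_le_ncard hsub).trans (Set.ncard_iUnion_le_of_fintype _)).trans ?_
  refine (Finset.sum_le_card_nsmul _ _ _ fun f _ => ?_).trans_eq (by rw [smul_eq_mul]; rfl)
  rw [Set.ncard_image_of_injective _ (Prod.mk_right_injective f)]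
  exact h.ncard_dist_dyadicCorner_le k x f

lemma exists_chain_of_dist_le (h : IsSquareAtlas P M) (k : ℕ) (x y : X)
    (hxy : M * dist x y ≤ (2 ^ k)⁻¹) : ∃ u : ℕ → X, u 0 = x ∧ u 4 = y ∧
      ∀ l < 4, ∃ Q, u l ∈ atlasPiece P k Q ∧ u (l + 1) ∈ atlasPiece P k Q := by
  obtain ⟨f, p, rfl⟩ := h.exists_eq x
  obtain ⟨g, p', rfl⟩ := h.exists_eq y
  obtain ⟨s, s', hss', hps, hsp'⟩ := h.exists_link f g p p'
    (hxy.trans (inv_le_one_of_one_le₀ (one_le_pow₀ one_le_two)))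
  obtain ⟨m, ⟨i₁, j₁, hp₁, hm₁⟩, i₂, j₂, hm₂, hs₂⟩ := exists_mem_dyadicSq_inter (hps.trans hxy)
  obtain ⟨m', ⟨i₃, j₃, hs₃, hm₃⟩, i₄, j₄, hm₄, hp₄⟩ := exists_mem_dyadicSq_inter (hsp'.trans hxy)
  refine ⟨![P f p, P f m, P f s, P g m', P g p'] ∘ Fin.ofNat 5, rfl, rfl, fun l hl => ?_⟩
  interval_cases l
  · exact ⟨(f, i₁, j₁), ⟨p, hp₁, rfl⟩, m, hm₁, rfl⟩
  · exact ⟨(f, i₂, j₂), ⟨m, hm₂, rfl⟩, s, hs₂, rfl⟩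
  · exact ⟨(g, i₃, j₃), ⟨s', hs₃, hss'.symm⟩, m', hm₃, rfl⟩
  · exact ⟨(g, i₄, j₄), ⟨m', hm₄, rfl⟩, p', hp₄, rfl⟩

lemma isDyadicSystem [Fintype F] (h : IsSquareAtlas P M) :
    IsDyadicSystem (atlasPiece P) (atlasCenter P) M
      (Fintype.card F * (2 * ⌈8 * M ^ 2⌉₊ + 1) ^ 2) 4 where
  pos := one_pos.trans_le h.one_le
  subset_closedBall := h.atlasPiece_subset_closedBall
  ncard_le := h.ncard_dist_atlasCenter_le
  exists_chain := h.exists_chain_of_dist_le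

end IsSquareAtlas

end SquareAtlas

section Cube

/-- The coordinate that is constant on `cubeFace f`. -/
def faceAxis : Fin 6 → Fin 3 := ![0, 0, 1, 1, 2, 2]

/-- The value of the coordinate `faceAxis f` on `cubeFace f`. -/
def faceValue : Fin 6 → ℝ := ![0, 1, 0, 1, 0, 1]

lemma faceValue_eq_or_abs_sub_eq_one (f g : Fin 6) :
    faceValue f = faceValue g ∨ |faceValue f - faceValue g| = 1 := by
  fin_cases f <;> fin_cases g <;> simp [faceValue]

lemma abs_apply_sub_le_dist {n : ℕ} (x y : EuclideanSpace ℝ (Fin n)) (i : Fin n) :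
    |x i - y i| ≤ dist x y := by
  rw [dist_eq_norm]
  exact PiLp.norm_apply_le (x - y) i

lemma dist_le_two_mul_of_abs_apply_sub_le {x y : EuclideanSpace ℝ (Fin 3)} {r : ℝ}
    (h : ∀ i, |x i - y i| ≤ r) : dist x y ≤ 2 * r := by
  have hr : 0 ≤ r := (abs_nonneg _).trans (h 0)
  have hsq : ∀ i, dist (x i) (y i) ^ 2 ≤ r ^ 2 := fun i => pow_le_pow_left₀ dist_nonneg (h i) 2
  rw [EuclideanSpace.dist_eq, Fin.sum_univ_three]
  refine Real.sqrt_le_iff.2 ⟨by positivity, ?_⟩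
  nlinarith [hsq 0, hsq 1, hsq 2]

lemma antilipschitzWith_cubeFace (f : Fin 6) : AntilipschitzWith 1 (cubeFace f) := by
  refine .of_le_mul_dist fun p p' => ?_
  have h := abs_apply_sub_le_dist (cubeFace f p) (cubeFace f p')
  rw [NNReal.coe_one, one_mul, Prod.dist_eq, Real.dist_eq, Real.dist_eq]
  refine max_le ?_ ?_
  · fin_cases f
    exacts [h 1, h 1, h 0, h 0, h 0, h 0]
  · fin_cases f
    exacts [h 2, h 2, h 2, h 2, h 1, h 1]

lemma lipschitzWith_cubeFace (f : Fin 6) : LipschitzWith 2 (cubeFace f) := by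
  refine .of_dist_le_mul fun p p' => dist_le_two_mul_of_abs_apply_sub_le fun i => ?_
  rw [Prod.dist_eq, Real.dist_eq, Real.dist_eq]
  fin_cases f <;> fin_cases i <;> simp [cubeFace]

lemma mem_image_cubeFace_iff {f : Fin 6} {z : EuclideanSpace ℝ (Fin 3)} :
    z ∈ cubeFace f '' (Set.Icc 0 1 ×ˢ Set.Icc 0 1) ↔
      (∀ i, z i ∈ Set.Icc (0 : ℝ) 1) ∧ z (faceAxis f) = faceValue f := by
  constructor
  · rintro ⟨p, ⟨⟨h₁, h₂⟩, h₃, h₄⟩, rfl⟩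
    refine ⟨fun i => ?_, by fin_cases f <;> rfl⟩
    fin_cases f <;> fin_cases i <;> simp [cubeFace, h₁, h₂, h₃, h₄]
  · rintro ⟨hz, hf⟩
    have hmem : ∀ i j, ((z i, z j) : ℝ × ℝ) ∈ Set.Icc (0 : ℝ) 1 ×ˢ Set.Icc (0 : ℝ) 1 :=
      fun i j => ⟨hz i, hz j⟩
    fin_cases f <;> simp only [faceAxis, faceValue] at hf
    exacts [⟨_, hmem 1 2, by ext i; fin_cases i <;> simp_all [cubeFace]⟩,
      ⟨_, hmem 1 2, by ext i; fin_cases i <;> simp_all [cubeFace]⟩,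
      ⟨_, hmem 0 2, by ext i; fin_cases i <;> simp_all [cubeFace]⟩,
      ⟨_, hmem 0 2, by ext i; fin_cases i <;> simp_all [cubeFace]⟩,
      ⟨_, hmem 0 1, by ext i; fin_cases i <;> simp_all [cubeFace]⟩,
      ⟨_, hmem 0 1, by ext i; fin_cases i <;> simp_all [cubeFace]⟩]

lemma exists_mem_image_cubeFace_inter {f g : Fin 6} {x y : EuclideanSpace ℝ (Fin 3)}
    (hx : x ∈ cubeFace f '' (Set.Icc 0 1 ×ˢ Set.Icc 0 1))
    (hy : y ∈ cubeFace g '' (Set.Icc 0 1 ×ˢ Set.Icc 0 1)) (hxy : dist x y < 1) :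
    ∃ z ∈ cubeFace f '' (Set.Icc 0 1 ×ˢ Set.Icc 0 1) ∩
        cubeFace g '' (Set.Icc 0 1 ×ˢ Set.Icc 0 1),
      dist x z ≤ 2 * dist x y ∧ dist z y ≤ 2 * dist x y := by
  rw [mem_image_cubeFace_iff] at hx hy
  have hle := abs_apply_sub_le_dist x y
  have hsame : faceAxis g = faceAxis f → faceValue g = faceValue f := fun hax =>
    (faceValue_eq_or_abs_sub_eq_one g f).resolve_right fun h => by
      have := (hle (faceAxis f)).trans_lt hxy
      rw [← hax, hy.2, hax, hx.2, abs_sub_comm, h] at this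
      exact this.false
  let z : EuclideanSpace ℝ (Fin 3) := WithLp.toLp 2 (Function.update x (faceAxis g) (faceValue g))
  have hz : ∀ i, z i = if i = faceAxis g then y i else x i := fun i => by
    change Function.update x (faceAxis g) (faceValue g) i = _
    rw [Function.update_apply, ← hy.2]; split_ifs with hi <;> simp [hi]
  have hzmem : ∀ i, z i ∈ Set.Icc (0 : ℝ) 1 := fun i => by
    rw [hz]; split_ifs
    exacts [hy.1 i, hx.1 i]
  refine ⟨z, ⟨mem_image_cubeFace_iff.2 ⟨hzmem, ?_⟩, mem_image_cubeFace_iff.2 ⟨hzmem, ?_⟩⟩,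
    dist_le_two_mul_of_abs_apply_sub_le fun i => ?_,
    dist_le_two_mul_of_abs_apply_sub_le fun i => ?_⟩ <;> rw [hz] <;> split_ifs with hi
  · rw [hi, hy.2, hsame hi.symm]
  · exact hx.2
  · exact hy.2
  · exact absurd rfl hi
  · exact hle i
  · simp
  · simp
  · exact hle i

/-- The face `cubeFace f` as a chart of the cube boundary. -/
def cubeChart (f : Fin 6) (p : UnitSquare) : cubeBoundary :=
  ⟨cubeFace f p, Set.mem_iUnion.2 ⟨f, p, p.2, rfl⟩⟩

lemma isSquareAtlas_cubeChart : IsSquareAtlas cubeChart 2 where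
  one_le := one_le_two
  lipschitzWith f := fun p p' => lipschitzWith_cubeFace f p p'
  antilipschitzWith f := .of_le_mul_dist fun p p' =>
    ((antilipschitzWith_cubeFace f).le_mul_dist p p').trans
      (mul_le_mul_of_nonneg_right one_le_two dist_nonneg)
  exists_eq x := by
    obtain ⟨f, p, hp, hx⟩ := Set.mem_iUnion.1 x.2
    exact ⟨f, ⟨p, hp⟩, Subtype.ext hx⟩
  exists_link f g p p' h := by
    obtain ⟨_, ⟨⟨s, hs, rfl⟩, s', hs', hss'⟩, hps, hsp'⟩ := exists_mem_image_cubeFace_inter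
      (Set.mem_image_of_mem (cubeFace f) p.2) (Set.mem_image_of_mem (cubeFace g) p'.2)
      (by change 2 * dist (cubeFace f p) (cubeFace g p') ≤ 1 at h; linarith)
    refine ⟨⟨s, hs⟩, ⟨s', hs'⟩, Subtype.ext hss'.symm, ?_, ?_⟩
    · exact ((antilipschitzWith_cubeFace f).le_mul_dist p s).trans
        (by rwa [NNReal.coe_one, one_mul])
    · rw [← hss'] at hsp'
      exact ((antilipschitzWith_cubeFace g).le_mul_dist s' p').trans
        (by rwa [NNReal.coe_one, one_mul])

end Cube

section Transfer

open Metric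

lemma comap_subtype_hausdorffMeasure {X : Type*} [MetricSpace X] [MeasurableSpace X] [BorelSpace X]
    {s : Set X} (hs : MeasurableSet s) {d : ℝ} (hd : 0 ≤ d) :
    (μH[d] : Measure X).comap ((↑) : s → X) = μH[d] :=
  Measure.ext fun _ _ => by
    rw [(MeasurableEmbedding.subtype_coe hs).comap_apply,
      isometry_subtype_coe.hausdorffMeasure_image (Or.inl hd)]

variable {E G : Type*} [NormedAddCommGroup E] [NormedAddCommGroup G] {q α : ℝ}

lemma ofReal_norm_rpow_div_norm_rpow (hq : 0 < q) {φ : E → G} (x y : E) :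
    ENNReal.ofReal (‖φ x - φ y‖ ^ q / ‖x - y‖ ^ α) =
      edist (φ x) (φ y) ^ q / edist x y ^ α := by
  rcases eq_or_ne x y with rfl | hxy
  · simp [Real.zero_rpow hq.ne', ENNReal.zero_rpow_of_pos hq]
  · have hpos : 0 < ‖x - y‖ := norm_pos_iff.2 (sub_ne_zero.2 hxy)
    rw [edist_dist, edist_dist, dist_eq_norm, dist_eq_norm,
      ENNReal.ofReal_div_of_pos (by positivity), ENNReal.ofReal_rpow_of_pos hpos,
      ENNReal.ofReal_rpow_of_nonneg (norm_nonneg _) hq.le]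

lemma lintegral_lintegral_eq_gagliardo [MeasurableSpace E] [BorelSpace E] {s : Set E} {t : Set G}
    (hs : MeasurableSet s) {d : ℝ} (hd : 0 ≤ d) (hq : 0 < q) {φ : E → G} {ψ : s → t}
    (hψ : ∀ x, (ψ x : G) = φ x) :
    ∫⁻ x in s, ∫⁻ y in s, ENNReal.ofReal (‖φ x - φ y‖ ^ q / ‖x - y‖ ^ α) ∂μH[d] ∂μH[d] =
      gagliardo (μH[d] : Measure s) ψ q α := by
  simp only [gagliardo, ← comap_subtype_hausdorffMeasure hs hd, Subtype.edist_eq, hψ,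
    ofReal_norm_rpow_div_norm_rpow hq]
  rw [← lintegral_subtype_comap hs]
  simp only [← lintegral_subtype_comap hs]

lemma exists_homeomorph_coe_eq {X Y : Type*} [TopologicalSpace X] [TopologicalSpace Y] [T2Space Y]
    {s : Set X} {t : Set Y} (hs : IsCompact s) {φ : X → Y} (hφ : Set.BijOn φ s t)
    (hφc : ContinuousOn φ s) : ∃ ψ : s ≃ₜ t, ∀ x, (ψ x : Y) = φ x := by
  have : CompactSpace s := isCompact_iff_compactSpace.1 hs
  have hcont : Continuous hφ.equiv := (hφc.mapsToRestrict hφ.mapsTo)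
  exact ⟨hcont.homeoOfEquivCompactToT2, fun _ => rfl⟩

lemma nontrivial_sphere [NormedSpace ℝ E] [Nontrivial E] : Nontrivial (sphere (0 : E) 1) := by
  obtain ⟨x, hx⟩ := (NormedSpace.sphere_nonempty (E := E) (x := 0)).2 zero_le_one
  exact ⟨⟨x, hx⟩, -⟨x, hx⟩, ne_neg_of_mem_unit_sphere ℝ _⟩

lemma dyadicSq_subset {k : ℕ} (i j : Fin (2 ^ k)) :
    dyadicSq k i j ⊆ Set.Icc (0 : ℝ) 1 ×ˢ Set.Icc (0 : ℝ) 1 := by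
  have hsub : ∀ i : Fin (2 ^ k), Set.Icc ((i : ℝ) / 2 ^ k) ((i + 1) / 2 ^ k) ⊆ Set.Icc 0 1 :=
    fun i => Set.Icc_subset_Icc (by positivity)
      (div_le_one_of_le₀ (mod_cast i.2) (by positivity))
  exact Set.prod_mono (hsub i) (hsub j)

lemma image_image_dyadicSq_eq {Y : Type*} {t : Set Y} {Φ : EuclideanSpace ℝ (Fin 3) → Y}
    {Ψ : cubeBoundary → t} (hΨ : ∀ x, (Ψ x : Y) = Φ x) {k : ℕ} (f : Fin 6) (i j : Fin (2 ^ k)) :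
    Φ '' (cubeFace f '' dyadicSq k i j) =
      (↑) '' atlasPiece (fun f => Ψ ∘ cubeChart f) k (f, i, j) := by
  have hsq : dyadicSq k i j = ((↑) : UnitSquare → ℝ × ℝ) '' ((↑) ⁻¹' dyadicSq k i j) := by
    rw [Subtype.image_preimage_coe, Set.inter_eq_right.2 (dyadicSq_subset i j)]
  conv_lhs => rw [hsq]
  simp only [atlasPiece, Set.image_image, Function.comp_apply, hΨ]
  rfl

lemma exists_isSquareAtlas_of_cubeBoundary {X : Type*} [PseudoMetricSpace X] {t : Set X}
    {Φ : EuclideanSpace ℝ (Fin 3) → X} {K : ℝ≥0} (hlip : LipschitzOnWith K Φ cubeBoundary)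
    (hanti : AntilipschitzWith K (cubeBoundary.domRestrict Φ)) (honto : Φ '' cubeBoundary = t) :
    ∃ Ψ : cubeBoundary → t, (∀ x, (Ψ x : X) = Φ x) ∧
      ∃ M, IsSquareAtlas (fun f => Ψ ∘ cubeChart f) M := by
  have hmaps : Set.MapsTo Φ cubeBoundary t := Set.mapsTo_iff_image_subset.2 honto.subset
  exact ⟨hmaps.restrict, fun _ => rfl, _, isSquareAtlas_cubeChart.comp
    (fun x y => hlip x.2 y.2) (fun x y => hanti x y)
    (hmaps.restrict_surjective_iff.2 honto.superset)⟩

lemma tsum_diam_rpow_eq_sum_ediam_rpow {X Y : Type*} [PseudoMetricSpace Y] {t : Set X} {u : Set Y}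
    {Φ : EuclideanSpace ℝ (Fin 3) → X} {Ψ : cubeBoundary → t} (hΨ : ∀ x, (Ψ x : X) = Φ x)
    {φ : X → Y} {ψ : t → u} (hψ : ∀ x, (ψ x : Y) = φ x) (hu : Bornology.IsBounded u)
    {q : ℝ} (hq : 0 ≤ q) (k : ℕ) {c : ℝ} (hc : 0 ≤ c) :
    ∑' f : Fin 6, ∑' i : Fin (2 ^ k), ∑' j : Fin (2 ^ k),
      ENNReal.ofReal (c * diam (φ '' (Φ '' (cubeFace f '' dyadicSq k i j))) ^ q) =
    ENNReal.ofReal c * ∑ Q, ediam (ψ '' atlasPiece (fun f => Ψ ∘ cubeChart f) k Q) ^ q := by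
  have hterm : ∀ (f : Fin 6) (i j : Fin (2 ^ k)),
      ENNReal.ofReal (c * diam (φ '' (Φ '' (cubeFace f '' dyadicSq k i j))) ^ q) =
        ENNReal.ofReal c * ediam (ψ '' atlasPiece (fun f => Ψ ∘ cubeChart f) k (f, i, j)) ^ q := by
    intro f i j
    have himage : φ '' (Φ '' (cubeFace f '' dyadicSq k i j)) =
        (↑) '' (ψ '' atlasPiece (fun f => Ψ ∘ cubeChart f) k (f, i, j)) := by
      rw [image_image_dyadicSq_eq hΨ, Set.image_image, Set.image_image]
      simp only [hψ]
    have hbdd : ediam (φ '' (Φ '' (cubeFace f '' dyadicSq k i j))) ≠ ⊤ :=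
      (hu.subset (himage ▸ Subtype.coe_image_subset _ _)).ediam_ne_top
    rw [ENNReal.ofReal_mul hc, ← ENNReal.ofReal_rpow_of_nonneg diam_nonneg hq, diam,
      ENNReal.ofReal_toReal hbdd, himage, isometry_subtype_coe.ediam_image]
  simp only [hterm, tsum_fintype, ← Finset.mul_sum, Fintype.sum_prod_type]

end Transfer

theorem stmt_0_general (q α : ℝ) (hq : 0 < q) (hα : 3 < α)
    (Φ : EuclideanSpace ℝ (Fin 3) → EuclideanSpace ℝ (Fin 3)) (K : ℝ≥0)
    (hΦlip : LipschitzOnWith K Φ cubeBoundary)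
    (hΦanti : AntilipschitzWith K (cubeBoundary.domRestrict Φ))
    (hΦonto : Φ '' cubeBoundary = Metric.sphere (0 : EuclideanSpace ℝ (Fin 3)) 1)
    (φ : EuclideanSpace ℝ (Fin 3) → EuclideanSpace ℝ (Fin 3))
    (hφ : Set.BijOn φ (Metric.sphere (0 : EuclideanSpace ℝ (Fin 3)) 1)
      (Metric.sphere (0 : EuclideanSpace ℝ (Fin 3)) 1))
    (hφc : ContinuousOn φ (Metric.sphere (0 : EuclideanSpace ℝ (Fin 3)) 1)) :
    (∫⁻ x in Metric.sphere (0 : EuclideanSpace ℝ (Fin 3)) 1,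
        ∫⁻ y in Metric.sphere (0 : EuclideanSpace ℝ (Fin 3)) 1,
          ENNReal.ofReal (‖φ x - φ y‖ ^ q / ‖x - y‖ ^ α) ∂μH[2] ∂μH[2]) < ⊤ ↔
      (∑' k : ℕ, ∑' f : Fin 6, ∑' i : Fin (2 ^ (k + 1)), ∑' j : Fin (2 ^ (k + 1)),
        ENNReal.ofReal ((2 : ℝ) ^ (((k : ℝ) + 1) * (α - 4)) *
          Metric.diam (φ '' (Φ '' (cubeFace f '' dyadicSq (k + 1) i j))) ^ q)) < ⊤ := by
  have hrank : 1 < Module.rank ℝ (EuclideanSpace ℝ (Fin 3)) := by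
    rw [rank_eq_card_basis (EuclideanSpace.basisFun (Fin 3) ℝ).toBasis]; norm_num
  have := Subtype.preconnectedSpace (isPreconnected_sphere hrank 0 1)
  have := nontrivial_sphere (E := EuclideanSpace ℝ (Fin 3))
  obtain ⟨Ψ, hΨ, M, hM⟩ := exists_isSquareAtlas_of_cubeBoundary hΦlip hΦanti hΦonto
  obtain ⟨ψ, hψ⟩ := exists_homeomorph_coe_eq (isCompact_sphere 0 1) hφ hφc
  obtain ⟨A, hA⟩ := exists_isAhlforsRegular_of_charts zero_le_two hM.one_le
    isAhlforsRegular_unitSquare hM.lipschitzWith hM.antilipschitzWith hM.exists_eq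
  obtain ⟨R, hR, hψR⟩ := exists_quasiMonotone (isPreconnected_compl_closedBall_sphere hrank) ψ
  rw [lintegral_lintegral_eq_gagliardo Metric.isClosed_sphere.measurableSet zero_le_two hq hψ,
    gagliardo_lt_top_iff hM.isDyadicSystem hA zero_le_two hq (by linarith) (by linarith)
      ψ.continuous hR hψR, ← tsum_add_nat_lt_top_iff (n := 1) fun k => ?_]
  · simp only [tsum_diam_rpow_eq_sum_ediam_rpow hΨ hψ Metric.isBounded_sphere hq.le _
      (Real.rpow_nonneg zero_le_two _), Nat.cast_add_one, show (2 * 2 : ℝ) = 4 by norm_num]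
  · exact ENNReal.mul_ne_top ENNReal.ofReal_ne_top (ENNReal.sum_ne_top.2 fun Q _ =>
      ENNReal.rpow_ne_top_of_nonneg hq.le Metric.isBounded_of_compactSpace.ediam_ne_top)

/-- Discrete characterization: for a homeomorphism `φ` of the unit sphere `S² ⊂ ℝ³` and `q > 2`,
with the dyadic decomposition `D̃_k` of `S²` induced by a bi-Lipschitz map `Φ` from the cube
boundary, the Gagliardo double integral `∫∫ |φ(x) − φ(y)|^q/|x−y|^{q+1}` (w.r.t. 2-dimensional
Hausdorff measure) is finite iff `∑_{k≥1} 2^{k(q−3)} ∑_{Q̃ ∈ D̃_k} (diam φ(Q̃))^q < ∞`. -/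
theorem stmt_0 (q : ℝ) (hq : 2 < q)
    (Φ : EuclideanSpace ℝ (Fin 3) → EuclideanSpace ℝ (Fin 3)) (K : ℝ≥0)
    (hΦlip : LipschitzOnWith K Φ cubeBoundary)
    (hΦanti : AntilipschitzWith K (cubeBoundary.restrict Φ))
    (hΦonto : Φ '' cubeBoundary = Metric.sphere (0 : EuclideanSpace ℝ (Fin 3)) 1)
    (φ : EuclideanSpace ℝ (Fin 3) → EuclideanSpace ℝ (Fin 3))
    (hφ : Set.BijOn φ (Metric.sphere (0 : EuclideanSpace ℝ (Fin 3)) 1)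
      (Metric.sphere (0 : EuclideanSpace ℝ (Fin 3)) 1))
    (hφc : ContinuousOn φ (Metric.sphere (0 : EuclideanSpace ℝ (Fin 3)) 1)) :
    (∫⁻ x in Metric.sphere (0 : EuclideanSpace ℝ (Fin 3)) 1,
        ∫⁻ y in Metric.sphere (0 : EuclideanSpace ℝ (Fin 3)) 1,
          ENNReal.ofReal (‖φ x - φ y‖ ^ q / ‖x - y‖ ^ (q + 1)) ∂μH[2] ∂μH[2]) < ⊤ ↔
      (∑' k : ℕ, ∑' f : Fin 6, ∑' i : Fin (2 ^ (k + 1)), ∑' j : Fin (2 ^ (k + 1)),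
        ENNReal.ofReal ((2 : ℝ) ^ (((k : ℝ) + 1) * (q - 3)) *
          Metric.diam (φ '' (Φ '' (cubeFace f '' dyadicSq (k + 1) i j))) ^ q)) < ⊤ := by
  rw [show q - 3 = q + 1 - 4 by ring]
  exact stmt_0_general q (q + 1) (by linarith) (by linarith) Φ K hΦlip hΦanti hΦonto φ hφ hφc

end
end

section
/- Let φ : [0,1]² → ℝ² be a homeomorphism, q ∈ (1,∞), and let D̃_k denote the k-th generation dyadic squares of [0,1]². If ∑_{k=1}^∞ 2^{k(q−3)} ∑_{S ∈ D̃_k} (diam φ(S))^q < ∞, then ∫_{[0,1]²}∫_{[0,1]²} |φ(x) − φ(y)|^q / |x − y|^{q+1} dx dy < ∞. -/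
open MeasureTheory

/-!
Two distinct points `x`, `y` of the unit square lie in touching dyadic squares `S`, `S'` of some
generation `n ≥ 1` with `|x - y| ≥ 2^{-n-1}`, so one of these squares, `S` say, satisfies
`|φ x - φ y| ≤ 2 diam φ(S)`, and both points lie in the concentric square `3S`. Hence the integrand
is at most the sum over all dyadic squares of
`2^{(n+1)(q+1)} (2 diam φ(S))^q 1_{3S}(x) 1_{3S}(y)`. Integrating each term over `x` and `y` brings
in the factor `|3S|² = 81 · 2^{-4n}`, which leaves a constant times `2^{n(q-3)} (diam φ(S))^q`.
-/

open Bornology Metric Set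

section Grid

variable {N : ℕ} {s t : ℝ}

/-- The index `i` of a grid interval `[i/N, (i+1)/N]` containing the point `s ∈ [0,1]`. The minimum
assigns the endpoint `1` to the last interval. -/
noncomputable def gridIndex (N : ℕ) (s : ℝ) : ℕ := min ⌊s * N⌋₊ (N - 1)

lemma gridIndex_lt (hN : 0 < N) (s : ℝ) : gridIndex N s < N := by
  unfold gridIndex
  omega

lemma mem_Icc_gridIndex (hN : 0 < N) (hs : s ∈ Icc (0 : ℝ) 1) :
    s ∈ Icc ((gridIndex N s : ℝ) / N) ((gridIndex N s + 1) / N) := by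
  have hN' : (0 : ℝ) < N := by exact_mod_cast hN
  rw [mem_Icc, div_le_iff₀ hN', le_div_iff₀ hN']
  constructor
  · calc (gridIndex N s : ℝ) ≤ ⌊s * N⌋₊ := by exact_mod_cast min_le_left _ _
      _ ≤ s * N := Nat.floor_le (mul_nonneg hs.1 hN'.le)
  · rcases min_choice ⌊s * N⌋₊ (N - 1) with hfloor | hlast
    · rw [gridIndex, hfloor]
      exact (Nat.lt_floor_add_one _).le
    · rw [gridIndex, hlast, ← Nat.cast_add_one, Nat.sub_add_cancel hN]
      exact mul_le_of_le_one_left hN'.le hs.2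

lemma gridIndex_le_gridIndex_add_one (ht : 0 ≤ t) (h : N ≤ 2 ∨ |s - t| ≤ 1 / N) :
    gridIndex N s ≤ gridIndex N t + 1 := by
  unfold gridIndex
  rcases h with hN | hst
  · omega
  rcases N.eq_zero_or_pos with rfl | hN
  · simp
  have hN' : (0 : ℝ) < N := by exact_mod_cast hN
  have hle : s * N ≤ t * N + 1 := by
    have := (le_div_iff₀ hN').1 ((le_abs_self _).trans hst)
    linarith
  have hfloor : ⌊s * N⌋₊ ≤ ⌊t * N⌋₊ + 1 :=
    (Nat.floor_le_floor hle).trans_eq (Nat.floor_add_one (by positivity))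
  omega

lemma Icc_div_inter_Icc_div_nonempty {i j : ℕ} (hij : i ≤ j + 1) (hji : j ≤ i + 1) (N : ℕ) :
    (Icc ((i : ℝ) / N) ((i + 1) / N) ∩ Icc ((j : ℝ) / N) ((j + 1) / N)).Nonempty := by
  have hij' : (i : ℝ) ≤ j + 1 := by exact_mod_cast hij
  have hji' : (j : ℝ) ≤ i + 1 := by exact_mod_cast hji
  refine ⟨max (i : ℝ) j / N, ⟨?_, ?_⟩, ?_, ?_⟩ <;> gcongr <;> simp [hij', hji']

lemma Icc_gridIndex_inter_nonempty (hs : 0 ≤ s) (ht : 0 ≤ t) (h : N ≤ 2 ∨ |s - t| ≤ 1 / N) :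
    (Icc ((gridIndex N s : ℝ) / N) ((gridIndex N s + 1) / N) ∩
      Icc ((gridIndex N t : ℝ) / N) ((gridIndex N t + 1) / N)).Nonempty :=
  Icc_div_inter_Icc_div_nonempty (gridIndex_le_gridIndex_add_one ht h)
    (gridIndex_le_gridIndex_add_one hs (by rwa [abs_sub_comm])) N

end Grid

section DyadicSquares

/-- The centre of `dyadicSq k i j`. -/
noncomputable def dyadicCenter (k i j : ℕ) : ℝ × ℝ :=
  ((i + 1 / 2) / 2 ^ k, (j + 1 / 2) / 2 ^ k)

/-- The square `3S` concentric with the dyadic square `S = dyadicSq k i j` and three times as large: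
the distance of `ℝ × ℝ` is the sup distance, whose balls are squares. It contains all squares of
generation `k` that touch `S`. -/
def tripleDyadicSq (k i j : ℕ) : Set (ℝ × ℝ) :=
  closedBall (dyadicCenter k i j) (3 * (1 / 2 / 2 ^ k))

lemma dyadicSq_eq_closedBall (k i j : ℕ) :
    dyadicSq k i j = closedBall (dyadicCenter k i j) (1 / 2 / 2 ^ k) := by
  rw [dyadicSq, dyadicCenter, ← closedBall_prod_same, Real.closedBall_eq_Icc,
    Real.closedBall_eq_Icc]
  congr 2 <;> ring

lemma closedBall_subset_closedBall_three_mul {X : Type*} [PseudoMetricSpace X] {c c' : X} {r : ℝ}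
    (h : (closedBall c r ∩ closedBall c' r).Nonempty) :
    closedBall c' r ⊆ closedBall c (3 * r) := by
  have hcenters : dist c' c ≤ r + r := by
    rw [dist_comm]
    exact dist_le_add_of_nonempty_closedBall_inter_closedBall h
  exact closedBall_subset_closedBall' (by linarith)

lemma dyadicSq_subset_tripleDyadicSq {k i j i' j' : ℕ}
    (h : (dyadicSq k i j ∩ dyadicSq k i' j').Nonempty) :
    dyadicSq k i' j' ⊆ tripleDyadicSq k i j := by
  rw [dyadicSq_eq_closedBall, dyadicSq_eq_closedBall] at h
  rw [dyadicSq_eq_closedBall]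
  exact closedBall_subset_closedBall_three_mul h

lemma measurableSet_tripleDyadicSq (k i j : ℕ) : MeasurableSet (tripleDyadicSq k i j) :=
  measurableSet_closedBall

lemma volume_tripleDyadicSq (k i j : ℕ) :
    volume (tripleDyadicSq k i j) = ENNReal.ofReal ((3 / 2 ^ k) ^ 2) := by
  rw [tripleDyadicSq, dyadicCenter, ← closedBall_prod_same, Measure.volume_eq_prod,
    Measure.prod_prod, Real.volume_closedBall, Real.volume_closedBall,
    ← ENNReal.ofReal_mul (by positivity)]
  congr 1
  ring

lemma dyadicSq_subset_unitSquare {k i j : ℕ} (hi : i < 2 ^ k) (hj : j < 2 ^ k) :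
    dyadicSq k i j ⊆ Icc (0 : ℝ) 1 ×ˢ Icc (0 : ℝ) 1 := by
  have hsub {n : ℕ} (hn : n < 2 ^ k) :
      Icc ((n : ℝ) / 2 ^ k) (((n : ℝ) + 1) / 2 ^ k) ⊆ Icc (0 : ℝ) 1 := by
    refine Icc_subset_Icc (by positivity) ?_
    rw [div_le_one (by positivity)]
    exact_mod_cast hn
  exact prod_mono (hsub hi) (hsub hj)

variable {k : ℕ} {x y : ℝ × ℝ}

/-- For `k ≤ 1` all squares of generation `k` touch each other. -/
lemma exists_dyadicSq_inter_nonempty (hx : x ∈ Icc (0 : ℝ) 1 ×ˢ Icc (0 : ℝ) 1)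
    (hy : y ∈ Icc (0 : ℝ) 1 ×ˢ Icc (0 : ℝ) 1) (h : k ≤ 1 ∨ dist x y ≤ 1 / 2 ^ k) :
    ∃ p p' : Fin (2 ^ k) × Fin (2 ^ k), x ∈ dyadicSq k p.1 p.2 ∧ y ∈ dyadicSq k p'.1 p'.2 ∧
      (dyadicSq k p.1 p.2 ∩ dyadicSq k p'.1 p'.2).Nonempty := by
  have hpos : 0 < 2 ^ k := by positivity
  have hcoord {s t : ℝ} (hst : |s - t| ≤ dist x y) :
      2 ^ k ≤ 2 ∨ |s - t| ≤ 1 / (2 ^ k : ℕ) := by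
    refine h.imp (fun hk ↦ Nat.pow_le_pow_right two_pos hk) fun hxy ↦ ?_
    push_cast
    exact hst.trans hxy
  let index (z : ℝ × ℝ) : Fin (2 ^ k) × Fin (2 ^ k) :=
    (⟨gridIndex (2 ^ k) z.1, gridIndex_lt hpos _⟩, ⟨gridIndex (2 ^ k) z.2, gridIndex_lt hpos _⟩)
  have hmem {z : ℝ × ℝ} (hz : z ∈ Icc (0 : ℝ) 1 ×ˢ Icc (0 : ℝ) 1) :
      z ∈ dyadicSq k (index z).1 (index z).2 := by
    simpa [dyadicSq] using mk_mem_prod (mem_Icc_gridIndex hpos hz.1) (mem_Icc_gridIndex hpos hz.2)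
  refine ⟨index x, index y, hmem hx, hmem hy, ?_⟩
  rw [dyadicSq, dyadicSq, prod_inter_prod]
  exact_mod_cast
    (Icc_gridIndex_inter_nonempty hx.1.1 hy.1.1 (hcoord (le_max_left _ _))).prod
      (Icc_gridIndex_inter_nonempty hx.2.1 hy.2.1 (hcoord (le_max_right _ _)))

end DyadicSquares

section Oscillation

variable {E : Type*} [PseudoMetricSpace E]

lemma dist_image_le_diam_image_add_diam_image {X : Type*} {φ : X → E} {S T : Set X} {x y : X}
    (hS : IsBounded (φ '' S)) (hT : IsBounded (φ '' T)) (hST : (S ∩ T).Nonempty)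
    (hx : x ∈ S) (hy : y ∈ T) :
    dist (φ x) (φ y) ≤ diam (φ '' S) + diam (φ '' T) :=
  (dist_le_diam_of_mem (hS.union hT) (.inl (mem_image_of_mem φ hx))
    (.inr (mem_image_of_mem φ hy))).trans
    (diam_union' ((hST.image φ).mono (image_inter_subset φ S T)))

variable {φ : ℝ × ℝ → E} {x y : ℝ × ℝ}

lemma exists_dyadicSq_dist_image_le_two_mul_diam {k : ℕ}
    (hφ : IsBounded (φ '' (Icc (0 : ℝ) 1 ×ˢ Icc (0 : ℝ) 1)))
    (hx : x ∈ Icc (0 : ℝ) 1 ×ˢ Icc (0 : ℝ) 1) (hy : y ∈ Icc (0 : ℝ) 1 ×ˢ Icc (0 : ℝ) 1)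
    (h : k ≤ 1 ∨ dist x y ≤ 1 / 2 ^ k) :
    ∃ p : Fin (2 ^ k) × Fin (2 ^ k), x ∈ tripleDyadicSq k p.1 p.2 ∧ y ∈ tripleDyadicSq k p.1 p.2 ∧
      dist (φ x) (φ y) ≤ 2 * diam (φ '' dyadicSq k p.1 p.2) := by
  obtain ⟨p, p', hxp, hyp', hpp'⟩ := exists_dyadicSq_inter_nonempty hx hy h
  have hbdd (p : Fin (2 ^ k) × Fin (2 ^ k)) : IsBounded (φ '' dyadicSq k p.1 p.2) :=
    hφ.subset (image_mono (dyadicSq_subset_unitSquare p.1.isLt p.2.isLt))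
  have hdist := dist_image_le_diam_image_add_diam_image (hbdd p) (hbdd p') hpp' hxp hyp'
  rcases le_total (diam (φ '' dyadicSq k p'.1 p'.2)) (diam (φ '' dyadicSq k p.1 p.2)) with hle | hle
  · exact ⟨p, dyadicSq_subset_tripleDyadicSq (by simpa using ⟨x, hxp⟩) hxp,
      dyadicSq_subset_tripleDyadicSq hpp' hyp', by linarith⟩
  · exact ⟨p', dyadicSq_subset_tripleDyadicSq (inter_comm _ _ ▸ hpp') hxp,
      dyadicSq_subset_tripleDyadicSq (by simpa using ⟨y, hyp'⟩) hyp', by linarith⟩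

lemma exists_dyadic_scale {d : ℝ} (hd : 0 < d) (hd1 : d ≤ 1) :
    ∃ k : ℕ, (k = 0 ∨ d ≤ 1 / 2 ^ (k + 1)) ∧ d⁻¹ ≤ 2 * 2 ^ (k + 1) := by
  obtain ⟨n, hn, hn'⟩ := exists_nat_pow_near ((one_le_inv₀ hd).2 hd1) one_lt_two
  rcases n with _ | k
  · exact ⟨0, .inl rfl, by linarith⟩
  · refine ⟨k, .inr ?_, hn'.le.trans_eq (pow_succ' 2 (k + 1))⟩
    rw [one_div]
    exact le_inv_of_le_inv₀ (by positivity) hn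

lemma exists_dyadicSq_dist_rpow_div_dist_rpow_le {q s : ℝ} (hq : 0 ≤ q) (hs : 0 ≤ s)
    (hφ : IsBounded (φ '' (Icc (0 : ℝ) 1 ×ˢ Icc (0 : ℝ) 1)))
    (hx : x ∈ Icc (0 : ℝ) 1 ×ˢ Icc (0 : ℝ) 1) (hy : y ∈ Icc (0 : ℝ) 1 ×ˢ Icc (0 : ℝ) 1)
    (hxy : x ≠ y) :
    ∃ (k : ℕ) (p : Fin (2 ^ (k + 1)) × Fin (2 ^ (k + 1))),
      x ∈ tripleDyadicSq (k + 1) p.1 p.2 ∧ y ∈ tripleDyadicSq (k + 1) p.1 p.2 ∧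
      dist (φ x) (φ y) ^ q / dist x y ^ s ≤
        (2 * diam (φ '' dyadicSq (k + 1) p.1 p.2)) ^ q * (2 * 2 ^ (k + 1)) ^ s := by
  have hdist_le : dist x y ≤ 1 := by
    have hcoord {a b : ℝ} (ha : a ∈ Icc (0 : ℝ) 1) (hb : b ∈ Icc (0 : ℝ) 1) : dist a b ≤ 1 := by
      simpa using Real.dist_le_of_mem_Icc ha hb
    exact max_le (hcoord hx.1 hy.1) (hcoord hx.2 hy.2)
  obtain ⟨k, hk, hinv⟩ := exists_dyadic_scale (dist_pos.2 hxy) hdist_le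
  obtain ⟨p, hxp, hyp, hp⟩ := exists_dyadicSq_dist_image_le_two_mul_diam hφ hx hy
    (hk.imp_left fun hk0 ↦ by omega)
  refine ⟨k, p, hxp, hyp, ?_⟩
  rw [div_eq_mul_inv, ← Real.inv_rpow dist_nonneg]
  gcongr

end Oscillation

lemma setLIntegral_setLIntegral_le_tsum_mul_measure_mul_measure {X Y ι : Type*} [Countable ι]
    [MeasurableSpace X] [MeasurableSpace Y] {μ : Measure X} {ν : Measure Y} {A : Set X} {B : Set Y}
    (hA : MeasurableSet A) (hB : MeasurableSet B) {U : ι → Set X} {V : ι → Set Y}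
    (hU : ∀ n, MeasurableSet (U n)) (hV : ∀ n, MeasurableSet (V n)) {a : ι → ENNReal}
    {f : X → Y → ENNReal}
    (hf : ∀ x ∈ A, ∀ y ∈ B, f x y ≠ 0 → ∃ n, x ∈ U n ∧ y ∈ V n ∧ f x y ≤ a n) :
    ∫⁻ x in A, ∫⁻ y in B, f x y ∂ν ∂μ ≤ ∑' n, a n * (μ (U n) * ν (V n)) := by
  have hU' (n : ι) : Measurable ((U n).indicator (1 : X → ENNReal)) :=
    measurable_one.indicator (hU n)
  have hV' (n : ι) : Measurable ((V n).indicator (1 : Y → ENNReal)) :=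
    measurable_one.indicator (hV n)
  have hle : ∀ x ∈ A, ∀ y ∈ B,
      f x y ≤ ∑' n, a n * ((U n).indicator 1 x * (V n).indicator 1 y) := by
    intro x hx y hy
    by_cases h0 : f x y = 0
    · simp [h0]
    obtain ⟨n, hxn, hyn, hn⟩ := hf x hx y hy h0
    calc f x y ≤ a n * ((U n).indicator 1 x * (V n).indicator 1 y) := by simpa [hxn, hyn] using hn
      _ ≤ _ := ENNReal.le_tsum n
  calc ∫⁻ x in A, ∫⁻ y in B, f x y ∂ν ∂μ
    _ ≤ ∫⁻ x, ∫⁻ y, ∑' n, a n * ((U n).indicator 1 x * (V n).indicator 1 y) ∂ν ∂μ :=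
        (setLIntegral_mono' hA fun x hx ↦ (setLIntegral_mono' hB (hle x hx)).trans
          (setLIntegral_le_lintegral _ _)).trans (setLIntegral_le_lintegral _ _)
    _ = ∫⁻ x, ∑' n, a n * ((U n).indicator 1 x * ν (V n)) ∂μ := by
        refine lintegral_congr fun x ↦ ?_
        rw [lintegral_tsum fun n ↦ (((hV' n).const_mul _).const_mul _).aemeasurable]
        refine tsum_congr fun n ↦ ?_
        rw [lintegral_const_mul _ ((hV' n).const_mul _), lintegral_const_mul _ (hV' n),
          lintegral_indicator_one (hV n)]
    _ = ∑' n, a n * (μ (U n) * ν (V n)) := by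
        rw [lintegral_tsum fun n ↦ (((hU' n).mul_const _).const_mul _).aemeasurable]
        refine tsum_congr fun n ↦ ?_
        rw [lintegral_const_mul _ ((hU' n).mul_const _), lintegral_mul_const _ (hU' n),
          lintegral_indicator_one (hU n)]

lemma two_mul_rpow_mul_rpow_mul_volume_tripleDyadicSq {q s d : ℝ} (hd : 0 ≤ d) (k i j : ℕ) :
    ENNReal.ofReal ((2 * d) ^ q * (2 * 2 ^ k) ^ s) *
        (volume (tripleDyadicSq k i j) * volume (tripleDyadicSq k i j)) =
      ENNReal.ofReal (2 ^ q * 2 ^ s * 81) * ENNReal.ofReal (2 ^ ((k : ℝ) * (s - 4)) * d ^ q) := by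
  have hpow : (2 : ℝ) ^ ((k : ℝ) * (s - 4)) = ((2 : ℝ) ^ k) ^ s / (2 ^ k) ^ 4 := by
    rw [Real.rpow_mul zero_le_two, Real.rpow_natCast, Real.rpow_sub (by positivity)]
    norm_cast
  rw [volume_tripleDyadicSq, ← ENNReal.ofReal_mul (by positivity),
    ← ENNReal.ofReal_mul (by positivity), ← ENNReal.ofReal_mul (by positivity), hpow,
    Real.mul_rpow zero_le_two hd, Real.mul_rpow zero_le_two (by positivity)]
  congr 1
  ring

lemma lintegral_dist_rpow_div_dist_rpow_le {E : Type*} [PseudoMetricSpace E] {q s : ℝ}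
    (hq : 0 < q) (hs : 0 ≤ s) {φ : ℝ × ℝ → E}
    (hφ : IsBounded (φ '' (Icc (0 : ℝ) 1 ×ˢ Icc (0 : ℝ) 1))) :
    ∫⁻ x in Icc (0 : ℝ) 1 ×ˢ Icc (0 : ℝ) 1, ∫⁻ y in Icc (0 : ℝ) 1 ×ˢ Icc (0 : ℝ) 1,
        ENNReal.ofReal (dist (φ x) (φ y) ^ q / dist x y ^ s) ≤
      ENNReal.ofReal (2 ^ q * 2 ^ s * 81) *
        ∑' k : ℕ, ∑' i : Fin (2 ^ (k + 1)), ∑' j : Fin (2 ^ (k + 1)),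
          ENNReal.ofReal ((2 : ℝ) ^ (((k : ℝ) + 1) * (s - 4)) *
            diam (φ '' dyadicSq (k + 1) i j) ^ q) := by
  have hQ : MeasurableSet (Icc (0 : ℝ) 1 ×ˢ Icc (0 : ℝ) 1) :=
    measurableSet_Icc.prod measurableSet_Icc
  let triple (n : Σ k : ℕ, Fin (2 ^ (k + 1)) × Fin (2 ^ (k + 1))) : Set (ℝ × ℝ) :=
    tripleDyadicSq (n.1 + 1) n.2.1 n.2.2
  have htriple n : MeasurableSet (triple n) := measurableSet_tripleDyadicSq _ _ _
  refine (setLIntegral_setLIntegral_le_tsum_mul_measure_mul_measure hQ hQ htriple htriple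
    (a := fun n ↦ ENNReal.ofReal
      ((2 * diam (φ '' dyadicSq (n.1 + 1) n.2.1 n.2.2)) ^ q * (2 * 2 ^ (n.1 + 1)) ^ s))
    fun x hx y hy hne ↦ ?_).trans_eq ?_
  · have hxy : x ≠ y := by
      rintro rfl
      simp [Real.zero_rpow hq.ne'] at hne
    obtain ⟨k, p, hxp, hyp, hle⟩ :=
      exists_dyadicSq_dist_rpow_div_dist_rpow_le hq.le hs hφ hx hy hxy
    exact ⟨⟨k, p⟩, hxp, hyp, ENNReal.ofReal_le_ofReal hle⟩
  · simp only [triple, two_mul_rpow_mul_rpow_mul_volume_tripleDyadicSq diam_nonneg,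
      ENNReal.tsum_mul_left, ENNReal.tsum_sigma', ENNReal.tsum_prod', Nat.cast_add_one]

theorem stmt_3_general {E : Type*} [PseudoMetricSpace E] {q s : ℝ} (hq : 0 < q) (hs : 0 ≤ s)
    {φ : ℝ × ℝ → E} (hφ : IsBounded (φ '' (Icc (0 : ℝ) 1 ×ˢ Icc (0 : ℝ) 1)))
    (hsum :
      (∑' k : ℕ, ∑' i : Fin (2 ^ (k + 1)), ∑' j : Fin (2 ^ (k + 1)),
        ENNReal.ofReal ((2 : ℝ) ^ (((k : ℝ) + 1) * (s - 4)) *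
          diam (φ '' dyadicSq (k + 1) i j) ^ q)) ≠ ⊤) :
    (∫⁻ x in Icc (0 : ℝ) 1 ×ˢ Icc (0 : ℝ) 1, ∫⁻ y in Icc (0 : ℝ) 1 ×ˢ Icc (0 : ℝ) 1,
      ENNReal.ofReal (dist (φ x) (φ y) ^ q / dist x y ^ s)) < ⊤ :=
  (lintegral_dist_rpow_div_dist_rpow_le hq hs hφ).trans_lt
    (ENNReal.mul_lt_top ENNReal.ofReal_lt_top hsum.lt_top)

/-- Let `φ` be a homeomorphism of `[0,1]²` onto its image and `q ∈ (1,∞)`. If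
`∑_{k≥1} 2^{k(q−3)} ∑_{S ∈ D̃_k} (diam φ(S))^q < ∞`, then the Gagliardo double integral
`∫∫ |φ(x) − φ(y)|^q / |x − y|^{q+1} dx dy` over `[0,1]² × [0,1]²` is finite. -/
theorem stmt_3 (q : ℝ) (hq : 1 < q) (φ : ℝ × ℝ → ℝ × ℝ)
    (hc : ContinuousOn φ (Set.Icc (0 : ℝ) 1 ×ˢ Set.Icc (0 : ℝ) 1))
    (hi : Set.InjOn φ (Set.Icc (0 : ℝ) 1 ×ˢ Set.Icc (0 : ℝ) 1))
    (hsum :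
      (∑' k : ℕ, ∑' i : Fin (2 ^ (k + 1)), ∑' j : Fin (2 ^ (k + 1)),
        ENNReal.ofReal ((2 : ℝ) ^ (((k : ℝ) + 1) * (q - 3)) *
          Metric.diam (φ '' dyadicSq (k + 1) i j) ^ q)) ≠ ⊤) :
    (∫⁻ x in Set.Icc (0 : ℝ) 1 ×ˢ Set.Icc (0 : ℝ) 1,
      ∫⁻ y in Set.Icc (0 : ℝ) 1 ×ˢ Set.Icc (0 : ℝ) 1,
        ENNReal.ofReal (‖φ x - φ y‖ ^ q / ‖x - y‖ ^ (q + 1))) < ⊤ := by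
  have hbdd := ((isCompact_Icc.prod isCompact_Icc).image_of_continuousOn hc).isBounded
  simpa only [dist_eq_norm] using stmt_3_general (zero_lt_one.trans hq) (by linarith) hbdd
    (by simpa only [show q + 1 - 4 = q - 3 by ring] using hsum)
end
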